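/- arXiv:1910.14555 — 3 statements merged into one kernel-verified Lean document; each statement's English description precedes it below -/
import Mathlib

section
/- Let (Ω,Σ,μ) be a finite measure space, Z a real Banach space, and X ⊆ Z* a norm-closed subspace which is norming for Z. If ν : Σ → Z* is a countably additive μ-continuous vector measure satisfying condition (G), then for every B ∈ Σ the functional ν(B) : Z → ℝ is σ(Z,X)-sequentially continuous, i.e. ⟨ν(B), z_n⟩ → ⟨ν(B), z⟩ whenever (z_n) is a sequence in Z converging to z in the topology σ(Z,X). -/
open MeasureTheory Filter Set Topology
open scoped UniformConvergence

noncomputable section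

/-- The topology `σ(Z,X)` on `Z` of pointwise convergence on a subspace `X ⊆ Z*`. -/
def sigmaTop {Z : Type*} [NormedAddCommGroup Z] [NormedSpace ℝ Z]
    (X : Submodule ℝ (Z →L[ℝ] ℝ)) : TopologicalSpace Z :=
  TopologicalSpace.induced (fun z => fun x : X => (x : Z →L[ℝ] ℝ) z) Pi.topologicalSpace

/-- The weak* topology on the dual of `E`: pointwise convergence on `E`. -/
def wstarTop (E : Type*) [NormedAddCommGroup E] [NormedSpace ℝ E] :
    TopologicalSpace (E →L[ℝ] ℝ) :=
  TopologicalSpace.induced (fun f => (f : E → ℝ)) Pi.topologicalSpace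

/-- A norm-closed subspace `X ⊆ Z*` is norming for `Z` if
`|||z||| = sup {⟨x,z⟩ : x ∈ B_X}` is an equivalent norm on `Z`; since this sup is always
`≤ ‖z‖`, this amounts to the existence of `c > 0` with `c⬝‖z‖ ≤ |||z|||` for all `z`. -/
def IsNorming {Z : Type*} [NormedAddCommGroup Z] [NormedSpace ℝ Z]
    (X : Submodule ℝ (Z →L[ℝ] ℝ)) : Prop :=
  ∃ c > (0 : ℝ), ∀ z : Z, c * ‖z‖ ≤ sSup {r : ℝ | ∃ x ∈ X, ‖x‖ ≤ 1 ∧ r = x z}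

/-- The average range `𝒜_ν(A) = {ν(B)/μ(B) : B ∈ Σ, B ⊆ A, μ(B) > 0}`. -/
def avgRange {Ω : Type*} [MeasurableSpace Ω] {Z : Type*} [NormedAddCommGroup Z]
    [NormedSpace ℝ Z] (μ : Measure Ω) (ν : VectorMeasure Ω (Z →L[ℝ] ℝ)) (A : Set Ω) :
    Set (Z →L[ℝ] ℝ) :=
  {w | ∃ B : Set Ω, MeasurableSet B ∧ B ⊆ A ∧ 0 < μ B ∧ w = (μ B).toReal⁻¹ • ν B}

/-- Condition (G): for every `A ∈ Σ` with `μ(A) > 0`, the `w*`-closed convex hull of the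
average range `𝒜_ν(A)` intersects `X`. -/
def CondG {Ω : Type*} [MeasurableSpace Ω] {Z : Type*} [NormedAddCommGroup Z]
    [NormedSpace ℝ Z] (μ : Measure Ω) (ν : VectorMeasure Ω (Z →L[ℝ] ℝ))
    (X : Submodule ℝ (Z →L[ℝ] ℝ)) : Prop :=
  ∀ A : Set Ω, MeasurableSet A → 0 < μ A →
    (@closure _ (wstarTop Z) (convexHull ℝ (avgRange μ ν A)) ∩
      (X : Set (Z →L[ℝ] ℝ))).Nonempty

/-- `h` is a convex block subsequence of `g`: `h k = ∑_{n ∈ I k} a n • g n` where the finite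
sets `I k` satisfy `max (I k) < min (I (k+1))` and the `a n` are non-negative reals summing
to `1` over each `I k`. -/
def ConvexBlock {E : Type*} [AddCommMonoid E] [Module ℝ E] (g h : ℕ → E) : Prop :=
  ∃ (I : ℕ → Finset ℕ) (a : ℕ → ℝ),
    (∀ k, ∀ n ∈ I k, ∀ m ∈ I (k + 1), n < m) ∧
    (∀ n, 0 ≤ a n) ∧ (∀ k, ∑ n ∈ I k, a n = 1) ∧
    (∀ k, h k = ∑ n ∈ I k, a n • g n)

/-- `(B_{X*}, w*)` is convex block compact: every sequence in the closed unit ball of `X*`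
admits a convex block subsequence which is `w*`-convergent. -/
def DualBallConvexBlockCompact (X : Type*) [NormedAddCommGroup X] [NormedSpace ℝ X] : Prop :=
  ∀ g : ℕ → (X →L[ℝ] ℝ), (∀ n, ‖g n‖ ≤ 1) →
    ∃ h : ℕ → (X →L[ℝ] ℝ), ConvexBlock g h ∧
      ∃ f : X →L[ℝ] ℝ, Tendsto h atTop (@nhds _ (wstarTop X) f)


lemma L1_dual_rep {Ω : Type*} [MeasurableSpace Ω] (μ : Measure Ω) [IsFiniteMeasure μ]
    (Λ : Lp ℝ 1 μ →L[ℝ] ℝ) :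
    ∃ h : Ω → ℝ, Measurable h ∧ (∀ ω, |h ω| ≤ ‖Λ‖) ∧ ∀ g : Lp ℝ 1 μ, Λ g = ∫ ω, h ω * g ω ∂μ := by
  classical
  set m : Set Ω → ℝ := fun s => if hs : MeasurableSet s then
    Λ (indicatorConstLp 1 hs (measure_ne_top μ s) (1 : ℝ)) else 0 with hm
  have hmb : ∀ s, MeasurableSet s → |m s| ≤ ‖Λ‖ * μ.real s := by
    intro s hs
    simp only [hm, hs, dif_pos]
    have := Λ.le_opNorm (indicatorConstLp 1 hs (measure_ne_top μ s) (1 : ℝ))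
    rw [norm_indicatorConstLp (by simp) (by simp)] at this
    simpa using this
  have hmb' : ∀ s, ‖m s‖ₑ ≤ (ENNReal.ofReal ‖Λ‖ • μ) s := by
    intro s
    by_cases hs : MeasurableSet s
    · have := hmb s hs
      rw [← ofReal_norm, Real.norm_eq_abs]
      refine (ENNReal.ofReal_le_ofReal this).trans ?_
      rw [ENNReal.ofReal_mul (norm_nonneg _)]
      simp
    · simp [hm, hs]
  have hadd : ∀ s t, MeasurableSet s → MeasurableSet t → Disjoint s t →
      m (s ∪ t) = m s + m t := by
    intro s t hs ht hst
    simp only [hm, hs, ht, hs.union ht, dif_pos]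
    rw [indicatorConstLp_disjoint_union hs ht (measure_ne_top μ s) (measure_ne_top μ t) hst, map_add]
  have : IsFiniteMeasure (ENNReal.ofReal ‖Λ‖ • μ) := μ.smul_finite ENNReal.ofReal_ne_top
  let π : SignedMeasure Ω := VectorMeasure.of_additive_of_le_measure m hmb' hadd
    (by intro s hs; simp [hm, hs])
  have hπ : ∀ s, π s = m s := fun s => rfl
  have hac : π ≪ᵥ μ.toENNRealVectorMeasure := by
    refine VectorMeasure.AbsolutelyContinuous.mk fun s hs h0 => ?_
    rw [Measure.toENNRealVectorMeasure_apply_measurable hs] at h0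
    have := hmb s hs
    rw [hπ]
    simpa [measureReal_def, h0] using this
  have hdens := SignedMeasure.withDensityᵥ_rnDeriv_eq π μ hac
  set d := π.rnDeriv μ with hd
  have hdi : Integrable d μ := SignedMeasure.integrable_rnDeriv π μ
  have hdm : Measurable d := SignedMeasure.measurable_rnDeriv π μ
  have hdI : ∀ s, MeasurableSet s → ∫ ω in s, d ω ∂μ = m s := by
    intro s hs
    rw [← hπ, ← hdens, withDensityᵥ_apply hdi hs]
  have hle : d ≤ᵐ[μ] fun _ => ‖Λ‖ := by
    refine ae_le_of_forall_setIntegral_le hdi (integrable_const _) fun s hs _ => ?_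
    rw [hdI s hs, setIntegral_const, smul_eq_mul, mul_comm]
    exact (le_abs_self _).trans (hmb s hs)
  have hge : (fun _ => -‖Λ‖) ≤ᵐ[μ] d := by
    refine ae_le_of_forall_setIntegral_le (integrable_const _) hdi fun s hs _ => ?_
    rw [hdI s hs, setIntegral_const, smul_eq_mul]
    have := (abs_le.1 (hmb s hs)).1
    linarith
  let h : Ω → ℝ := fun ω => max (-‖Λ‖) (min (d ω) ‖Λ‖)
  have hh : h =ᵐ[μ] d := by
    filter_upwards [hle, hge] with ω h1 h2
    simp only [h]
    rw [min_eq_left h1, max_eq_right h2]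
  have hhm : Measurable h := measurable_const.max (hdm.min measurable_const)
  have hhb : ∀ ω, |h ω| ≤ ‖Λ‖ := fun ω => by
    have := norm_nonneg Λ
    rw [abs_le]
    exact ⟨le_max_left _ _, max_le (by linarith) (min_le_right _ _)⟩
  have hint : ∀ g : Lp ℝ 1 μ, Integrable (fun ω => h ω * g ω) μ := fun g =>
    (L1.integrable_coeFn g).bdd_mul hhm.aestronglyMeasurable
      (Eventually.of_forall fun ω => hhb ω)
  refine ⟨h, hhm, hhb, fun g => ?_⟩
  -- the right-hand side as a continuous linear map
  let J : Lp ℝ 1 μ →ₗ[ℝ] ℝ :=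
    { toFun := fun g => ∫ ω, h ω * g ω ∂μ
      map_add' := fun f g => by
        rw [← integral_add (hint f) (hint g)]
        refine integral_congr_ae ?_
        filter_upwards [Lp.coeFn_add f g] with ω hω
        rw [hω, Pi.add_apply]; ring
      map_smul' := fun c g => by
        rw [RingHom.id_apply, smul_eq_mul, ← integral_const_mul]
        refine integral_congr_ae ?_
        filter_upwards [Lp.coeFn_smul c g] with ω hω
        rw [hω, Pi.smul_apply, smul_eq_mul]; ring }
  let J' : Lp ℝ 1 μ →L[ℝ] ℝ := J.mkContinuous ‖Λ‖ (fun g => by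
    change ‖∫ ω, h ω * g ω ∂μ‖ ≤ _
    refine (norm_integral_le_integral_norm _).trans ?_
    rw [L1.norm_eq_integral_norm, ← integral_const_mul]
    refine integral_mono (hint g).norm ((L1.integrable_coeFn g).norm.const_mul _) fun ω => ?_
    simp only [norm_mul]
    exact mul_le_mul_of_nonneg_right (hhb ω) (norm_nonneg _))
  have key : ∀ g, Λ g = J' g := by
    intro g
    refine Lp.induction (by simp) (fun g => Λ g = J' g) ?_ ?_ ?_ g
    · intro c s hs hμs
      rw [Lp.simpleFunc.coe_indicatorConst]
      have e : indicatorConstLp 1 hs hμs.ne c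
          = c • indicatorConstLp (E := ℝ) 1 hs hμs.ne (1 : ℝ) := by
        refine Lp.ext ?_
        filter_upwards [Lp.coeFn_smul c (indicatorConstLp (E := ℝ) 1 hs hμs.ne (1 : ℝ)),
          indicatorConstLp_coeFn (p := 1) (hs := hs) (hμs := hμs.ne) (c := (1:ℝ)),
          indicatorConstLp_coeFn (p := 1) (hs := hs) (hμs := hμs.ne) (c := c)] with ω h1 h2 h3
        rw [h1, h3, Pi.smul_apply, h2]
        by_cases hω : ω ∈ s <;> simp [hω]
      rw [e, map_smul, map_smul]
      congr 1
      change _ = ∫ ω, h ω * (indicatorConstLp (E := ℝ) 1 hs hμs.ne (1 : ℝ)) ω ∂μ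
      have e1 : ∫ ω, h ω * (indicatorConstLp (E := ℝ) 1 hs hμs.ne (1 : ℝ)) ω ∂μ
          = ∫ ω in s, d ω ∂μ := by
        rw [← integral_indicator hs]
        refine integral_congr_ae ?_
        filter_upwards [hh, indicatorConstLp_coeFn (p := 1) (hs := hs) (hμs := hμs.ne) (c := (1:ℝ))]
          with ω h1 h2
        rw [h2, h1]
        by_cases hω : ω ∈ s <;> simp [hω]
      rw [e1, hdI s hs]
      simp only [hm, hs, dif_pos]
    · intro f g hf hg _ h1 h2
      rw [map_add, map_add, h1, h2]
    · exact isClosed_eq Λ.continuous J'.continuous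
  exact key g

lemma L1_weak_tendsto {Ω : Type*} [MeasurableSpace Ω] (μ : Measure Ω) [IsFiniteMeasure μ]
    (Λ : Lp ℝ 1 μ →L[ℝ] ℝ) (U : Filter ℕ) (g : ℕ → Lp ℝ 1 μ) (g₀ : Lp ℝ 1 μ) (R : ℝ)
    (hR : ∀ n, ‖g n‖ ≤ R)
    (hC : ∀ C, MeasurableSet C → Tendsto (fun n => ∫ ω in C, g n ω ∂μ) U (𝓝 (∫ ω in C, g₀ ω ∂μ))) :
    Tendsto (fun n => Λ (g n)) U (𝓝 (Λ g₀)) := by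
  obtain ⟨h, hm, hb, hrep⟩ := L1_dual_rep μ Λ
  have hsi : ∀ (s : SimpleFunc Ω ℝ) (f : Lp ℝ 1 μ), Integrable (fun ω => s ω * f ω) μ := by
    intro s f
    obtain ⟨c, hc⟩ := s.exists_forall_norm_le
    exact (L1.integrable_coeFn f).bdd_mul s.measurable.aestronglyMeasurable
      (Eventually.of_forall hc)
  have hs : ∀ s : SimpleFunc Ω ℝ,
      Tendsto (fun n => ∫ ω, s ω * g n ω ∂μ) U (𝓝 (∫ ω, s ω * g₀ ω ∂μ)) := by
    intro s
    induction s using SimpleFunc.induction with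
    | const c hs =>
      rename_i s
      have e : ∀ f : Lp ℝ 1 μ, ∫ ω, (SimpleFunc.piecewise s hs (SimpleFunc.const _ c)
          (SimpleFunc.const _ 0)) ω * f ω ∂μ = c * ∫ ω in s, f ω ∂μ := by
        intro f
        rw [← integral_const_mul, ← integral_indicator hs]
        congr 1
        ext ω
        by_cases hω : ω ∈ s <;> simp [hω]
      simp only [e]
      exact (hC s hs).const_mul c
    | add hd h1 h2 =>
      rename_i s t
      have e : ∀ f : Lp ℝ 1 μ, ∫ ω, (s + t) ω * f ω ∂μ
          = ∫ ω, s ω * f ω ∂μ + ∫ ω, t ω * f ω ∂μ := by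
        intro f
        rw [← integral_add (hsi s f) (hsi t f)]
        congr 1
        ext ω
        simp [add_mul]
      simp only [e]
      exact h1.add h2
  rw [Metric.tendsto_nhds]
  intro ε hε
  have hR0 : 0 ≤ |R| + ‖g₀‖ := by positivity
  set η := ε / 2 / (|R| + ‖g₀‖ + 1) with hη
  have hηpos : 0 < η := by positivity
  have hfin : (range fun ω => η * (⌊h ω / η⌋ : ℝ)).Finite := by
    have : (range fun ω => η * (⌊h ω / η⌋ : ℝ)) ⊆
        (fun k : ℤ => η * (k : ℝ)) '' (Icc ⌊-‖Λ‖ / η⌋ ⌊‖Λ‖ / η⌋) := by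
      rintro _ ⟨ω, rfl⟩
      refine ⟨⌊h ω / η⌋, ⟨?_, ?_⟩, rfl⟩
      · apply Int.floor_le_floor
        gcongr
        exact (abs_le.1 (hb ω)).1
      · apply Int.floor_le_floor
        gcongr
        exact (abs_le.1 (hb ω)).2
    exact ((Set.finite_Icc _ _).image _).subset this
  have hmeas : Measurable fun ω => η * (⌊h ω / η⌋ : ℝ) := by
    have : Measurable fun ω => ⌊h ω / η⌋ := Int.measurable_floor.comp (hm.div_const η)
    exact (measurable_from_top.comp this).const_mul η
  let s : SimpleFunc Ω ℝ := ⟨fun ω => η * (⌊h ω / η⌋ : ℝ), fun x => hmeas (measurableSet_singleton x),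
    hfin⟩
  have hsη : ∀ ω, |h ω - s ω| ≤ η := by
    intro ω
    change |h ω - η * (⌊h ω / η⌋ : ℝ)| ≤ η
    have h1 := Int.floor_le (h ω / η)
    have h2 := Int.lt_floor_add_one (h ω / η)
    have h3 : h ω = η * (h ω / η) := by field_simp
    rw [abs_le]
    constructor
    · nlinarith
    · nlinarith
  have hdiff : ∀ f : Lp ℝ 1 μ, |Λ f - ∫ ω, s ω * f ω ∂μ| ≤ η * ‖f‖ := by
    intro f
    have hint : Integrable (fun ω => h ω * f ω) μ :=
      (L1.integrable_coeFn f).bdd_mul hm.aestronglyMeasurable (Eventually.of_forall fun ω => hb ω)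
    rw [hrep, ← integral_sub hint (hsi s f), ← Real.norm_eq_abs]
    refine (norm_integral_le_integral_norm _).trans ?_
    rw [L1.norm_eq_integral_norm, ← integral_const_mul]
    refine integral_mono (hint.sub (hsi s f)).norm ((L1.integrable_coeFn f).norm.const_mul _)
      fun ω => ?_
    simp only [← sub_mul, norm_mul]
    exact mul_le_mul_of_nonneg_right (hsη ω) (norm_nonneg _)
  filter_upwards [(Metric.tendsto_nhds.1 (hs s)) (ε / 2) (by positivity)] with n hn
  rw [Real.dist_eq] at hn ⊢
  have h1 := hdiff (g n)
  have h2 := hdiff g₀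
  have h3 : η * ‖g n‖ ≤ η * |R| := by
    gcongr
    exact (hR n).trans (le_abs_self _)
  have h4 : η * (|R| + ‖g₀‖ + 1) = ε / 2 := by
    rw [hη]; field_simp
  rw [abs_lt] at hn ⊢
  rw [abs_le] at h1 h2
  constructor <;> nlinarith

lemma induced_eval_continuous {V I : Type*} (φ : V → I → ℝ) (i : I) :
    @Continuous _ _ (TopologicalSpace.induced φ Pi.topologicalSpace) _ (fun v => φ v i) := by
  let t : TopologicalSpace V := TopologicalSpace.induced φ Pi.topologicalSpace
  have h : Continuous φ := continuous_induced_dom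
  exact (continuous_apply i).comp h

lemma L1_density {Ω : Type*} [MeasurableSpace Ω] (μ : Measure Ω) [IsFiniteMeasure μ]
    (σ : SignedMeasure Ω) (h : ∀ C, MeasurableSet C → μ C = 0 → σ C = 0) :
    ∃ g : Lp ℝ 1 μ, ∀ C, MeasurableSet C → ∫ ω in C, g ω ∂μ = σ C := by
  have hac : σ ≪ᵥ μ.toENNRealVectorMeasure := by
    refine VectorMeasure.AbsolutelyContinuous.mk fun s hs h0 => ?_
    rw [Measure.toENNRealVectorMeasure_apply_measurable hs] at h0
    exact h s hs h0
  have hdens := SignedMeasure.withDensityᵥ_rnDeriv_eq σ μ hac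
  have hdi : Integrable (σ.rnDeriv μ) μ := SignedMeasure.integrable_rnDeriv σ μ
  refine ⟨hdi.toL1 _, fun C hC => ?_⟩
  have h1 : σ C = ∫ ω in C, σ.rnDeriv μ ω ∂μ := by
    rw [← withDensityᵥ_apply hdi hC, hdens]
  rw [h1]
  exact integral_congr_ae (ae_restrict_of_ae hdi.coeFn_toL1)

lemma L1_norm_le {Ω : Type*} [MeasurableSpace Ω] (μ : Measure Ω) [IsFiniteMeasure μ]
    (g : Lp ℝ 1 μ) (K : ℝ) (h : ∀ C, MeasurableSet C → |∫ ω in C, g ω ∂μ| ≤ K) :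
    ‖g‖ ≤ 2 * K := by
  have hm : MeasurableSet {ω | 0 ≤ g ω} :=
    measurableSet_le measurable_const (Lp.stronglyMeasurable g).measurable
  rw [L1.norm_eq_integral_norm, ← integral_add_compl hm (L1.integrable_coeFn g).norm]
  have e1 : ∫ ω in {ω | 0 ≤ g ω}, ‖g ω‖ ∂μ = ∫ ω in {ω | 0 ≤ g ω}, g ω ∂μ :=
    setIntegral_congr_fun hm fun ω hω => abs_of_nonneg hω
  have e2 : ∫ ω in {ω | 0 ≤ g ω}ᶜ, ‖g ω‖ ∂μ = - ∫ ω in {ω | 0 ≤ g ω}ᶜ, g ω ∂μ := by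
    rw [← integral_neg]
    exact setIntegral_congr_fun hm.compl fun ω hω => abs_of_neg (not_le.1 hω)
  rw [e1, e2]
  have h1 := (abs_le.1 (h _ hm)).2
  have h2 := (abs_le.1 (h _ hm.compl)).1
  linarith

lemma bs_aux {E : Type*} [NormedAddCommGroup E] [NormedSpace ℝ E] [CompleteSpace E]
    (X : Submodule ℝ E) (hX : IsClosed (X : Set E)) (e : ℕ → E →L[ℝ] ℝ)
    (h : ∀ x ∈ X, ∃ C, ∀ n, ‖e n x‖ ≤ C) :
    ∃ C, 0 ≤ C ∧ ∀ n, ∀ x ∈ X, |e n x| ≤ C * ‖x‖ := by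
  have : CompleteSpace X := hX.completeSpace_coe
  obtain ⟨C, hC⟩ : ∃ C, ∀ n, ‖(e n).comp X.subtypeL‖ ≤ C :=
    banach_steinhaus fun x => h x x.2
  refine ⟨C, (norm_nonneg ((e 0).comp X.subtypeL)).trans (hC 0), fun n x hx => ?_⟩
  exact (((e n).comp X.subtypeL).le_opNorm ⟨x, hx⟩).trans
    (mul_le_mul_of_nonneg_right (hC n) (norm_nonneg _))

lemma norm_bdd_of_sigma {Z : Type*} [NormedAddCommGroup Z] [NormedSpace ℝ Z]
    (X : Submodule ℝ (Z →L[ℝ] ℝ)) (hXclosed : IsClosed (X : Set (Z →L[ℝ] ℝ)))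
    (hXnorming : IsNorming X) (z : ℕ → Z)
    (hz : ∀ x ∈ X, Tendsto (fun n => x (z n)) atTop (𝓝 0)) : ∃ M, ∀ n, ‖z n‖ ≤ M := by
  obtain ⟨C, hC0, hC⟩ := bs_aux X hXclosed (fun n => ContinuousLinearMap.apply ℝ ℝ (z n))
    (fun x hx => by
      obtain ⟨C, hC⟩ := (hz x hx).norm.bddAbove_range
      exact ⟨C, fun n => hC ⟨n, rfl⟩⟩)
  obtain ⟨c, hc, hn⟩ := hXnorming
  refine ⟨C / c, fun n => ?_⟩
  rw [le_div_iff₀ hc, mul_comm]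
  refine (hn (z n)).trans (csSup_le ⟨0, 0, X.zero_mem, by simp, by simp⟩ ?_)
  rintro _ ⟨x, hx, hx1, rfl⟩
  have h1 : |x (z n)| ≤ C * ‖x‖ := hC n x hx
  nlinarith [le_abs_self (x (z n))]

lemma exists_limit_measure {Ω : Type*} [MeasurableSpace Ω]
    {Z : Type*} [NormedAddCommGroup Z] [NormedSpace ℝ Z]
    (ν : VectorMeasure Ω (Z →L[ℝ] ℝ)) (z : ℕ → Z) (M : ℝ) (hM : ∀ n, ‖z n‖ ≤ M)
    (U : Ultrafilter ℕ) :
    ∃ σ : SignedMeasure Ω, ∀ C, Tendsto (fun n => ν C (z n)) U (𝓝 (σ C)) := by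
  have hb : ∀ (T : Z →L[ℝ] ℝ) n, |T (z n)| ≤ ‖T‖ * M := fun T n =>
    (T.le_opNorm _).trans (mul_le_mul_of_nonneg_left (hM n) (norm_nonneg _))
  have hl : ∀ C, ∃ l, Tendsto (fun n => ν C (z n)) U (𝓝 l) := by
    intro C
    have hK : IsCompact (Icc (-(‖ν C‖ * M)) (‖ν C‖ * M)) := isCompact_Icc
    obtain ⟨l, -, hl⟩ := hK.ultrafilter_le_nhds (U.map fun n => ν C (z n)) (by
      rw [le_principal_iff]
      exact mem_map.2 (Eventually.of_forall fun n => abs_le.1 (hb (ν C) n)))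
    exact ⟨l, hl⟩
  choose L hL using hl
  refine ⟨⟨L, ?_, ?_, ?_⟩, hL⟩
  · refine tendsto_nhds_unique (hL ∅) ?_
    simp
  · intro C hC
    refine tendsto_nhds_unique (hL C) ?_
    simp [ν.not_measurable hC]
  · intro f hf hd
    have hs := ν.m_iUnion hf hd
    rw [HasSum, Metric.tendsto_nhds] at hs ⊢
    intro ε hε
    have hM0 : 0 ≤ M := (norm_nonneg _).trans (hM 0)
    filter_upwards [hs (ε / (M + 1)) (by positivity)] with s hs
    have ht : Tendsto (fun n => ((∑ i ∈ s, ν (f i)) - ν (⋃ i, f i)) (z n)) U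
        (𝓝 ((∑ i ∈ s, L (f i)) - L (⋃ i, f i))) := by
      simp only [sub_apply, sum_apply]
      exact (tendsto_finsetSum _ fun i _ => hL (f i)).sub (hL _)
    have hle := le_of_tendsto ht.abs (Eventually.of_forall fun n => hb _ n)
    rw [Real.dist_eq]
    rw [dist_eq_norm] at hs
    refine hle.trans_lt ?_
    rw [lt_div_iff₀ (by positivity)] at hs
    nlinarith [norm_nonneg ((∑ i ∈ s, ν (f i)) - ν (⋃ i, f i))]

lemma core {Ω : Type*} [MeasurableSpace Ω] (μ : Measure Ω) [IsFiniteMeasure μ]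
    {Z : Type*} [NormedAddCommGroup Z] [NormedSpace ℝ Z]
    (X : Submodule ℝ (Z →L[ℝ] ℝ))
    (ν : VectorMeasure Ω (Z →L[ℝ] ℝ))
    (hν : ∀ A : Set Ω, μ A = 0 → ν A = 0)
    (hG : CondG μ ν X) (B : Set Ω) (hB : MeasurableSet B)
    (z : ℕ → Z) (M : ℝ) (hM : ∀ n, ‖z n‖ ≤ M)
    (hz : ∀ x ∈ X, Tendsto (fun n => x (z n)) atTop (𝓝 0)) (ε : ℝ) (hε : 0 < ε) :
    ∀ᶠ n in atTop, ν B (z n) < ε := by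
  by_contra hcon
  have hfr : ∃ᶠ n in atTop, ε ≤ ν B (z n) := by
    simpa [Filter.Frequently, not_le] using hcon
  have hne : (atTop ⊓ 𝓟 {n | ε ≤ ν B (z n)}).NeBot := frequently_mem_iff_neBot.1 hfr
  let U : Ultrafilter ℕ := Ultrafilter.of (atTop ⊓ 𝓟 {n | ε ≤ ν B (z n)})
  have hU : (U : Filter ℕ) ≤ atTop ⊓ 𝓟 {n | ε ≤ ν B (z n)} := Ultrafilter.of_le _
  have hUt : (U : Filter ℕ) ≤ atTop := hU.trans inf_le_left
  have hUS : ∀ᶠ n in (U : Filter ℕ), ε ≤ ν B (z n) :=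
    le_principal_iff.1 (hU.trans inf_le_right)
  obtain ⟨σ, hσ⟩ := exists_limit_measure ν z M hM U
  have hσ0 : ∀ C, MeasurableSet C → μ C = 0 → σ C = 0 := by
    intro C _ h0
    refine tendsto_nhds_unique (hσ C) ?_
    simp [hν C h0]
  have hσB : ε ≤ σ B := ge_of_tendsto (hσ B) hUS
  obtain ⟨g₀, hg₀⟩ := L1_density μ σ hσ0
  have hg : ∀ n, ∃ g : Lp ℝ 1 μ, ∀ C, MeasurableSet C → ∫ ω in C, g ω ∂μ = ν C (z n) := by
    intro n
    obtain ⟨g, hg⟩ := L1_density μ (ν.mapRange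
      (AddMonoidHom.mk' (fun T : Z →L[ℝ] ℝ => T (z n)) fun _ _ => rfl)
      (ContinuousLinearMap.apply ℝ ℝ (z n) : (Z →L[ℝ] ℝ) →L[ℝ] ℝ).continuous)
      (fun C _ h0 => by
        change ν C (z n) = 0
        rw [hν C h0]; rfl)
    exact ⟨g, fun C hC => (hg C hC).trans rfl⟩
  choose g hg using hg
  have hM0 : 0 ≤ M := (norm_nonneg _).trans (hM 0)
  have hR : ∀ n, ‖g n‖ ≤ 2 * (ν.bound * M) := by
    intro n
    refine L1_norm_le μ _ _ fun C hC => ?_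
    rw [hg n C hC]
    exact ((ν C).le_opNorm _).trans
      (mul_le_mul VectorMeasure.norm_apply_le_bound (hM n) (norm_nonneg _) (by positivity))
  -- Mazur
  let T : ℕ → Set (Lp ℝ 1 μ) := fun N => {f | ∃ w ∈ convexHull ℝ (z '' Ici N),
    ∀ C, MeasurableSet C → ∫ ω in C, f ω ∂μ = ν C w}
  have hTconv : ∀ N, Convex ℝ (T N) := by
    rintro N f₁ ⟨w₁, hw₁, h₁⟩ f₂ ⟨w₂, hw₂, h₂⟩ a b ha hb hab
    refine ⟨a • w₁ + b • w₂, convex_convexHull ℝ _ hw₁ hw₂ ha hb hab, fun C hC => ?_⟩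
    have i₁ := L1.integrable_coeFn f₁
    have i₂ := L1.integrable_coeFn f₂
    have : ∫ ω in C, (a • f₁ + b • f₂ : Lp ℝ 1 μ) ω ∂μ
        = ∫ ω in C, (a * f₁ ω + b * f₂ ω) ∂μ := by
      refine integral_congr_ae (ae_restrict_of_ae ?_)
      filter_upwards [Lp.coeFn_add (a • f₁) (b • f₂), Lp.coeFn_smul a f₁, Lp.coeFn_smul b f₂]
        with ω h1 h2 h3
      rw [h1, Pi.add_apply, h2, h3]; rfl
    rw [this, integral_add (i₁.integrableOn.const_mul a) (i₂.integrableOn.const_mul b),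
      integral_const_mul, integral_const_mul, h₁ C hC, h₂ C hC, map_add, map_smul, map_smul]
    rfl
  have hcl : ∀ N, g₀ ∈ closure (T N) := by
    intro N
    by_contra hnot
    obtain ⟨Λ, u, h1, h2⟩ := geometric_hahn_banach_point_closed (hTconv N).closure
      isClosed_closure hnot
    have ht : Tendsto (fun n => Λ (g n)) U (𝓝 (Λ g₀)) := by
      refine L1_weak_tendsto μ Λ U g g₀ _ hR fun C hC => ?_
      simp only [hg _ C hC, hg₀ C hC]
      exact hσ C
    have : u ≤ Λ g₀ := by
      refine ge_of_tendsto ht ?_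
      filter_upwards [hUt (Ici_mem_atTop N)] with n hn
      exact (h2 _ (subset_closure ⟨z n, subset_convexHull ℝ _ ⟨n, hn, rfl⟩, hg n⟩)).le
    linarith
  -- the set where the limit density is bounded below
  set δ := ε / (2 * (μ.real univ + 1)) with hδ
  have hδpos : 0 < δ := by positivity
  have hg₀m : Measurable g₀ := (Lp.stronglyMeasurable g₀).measurable
  let A : Set Ω := B ∩ {ω | δ ≤ g₀ ω}
  have hA : MeasurableSet A := hB.inter (measurableSet_le measurable_const hg₀m)
  have hμA : 0 < μ A := by
    by_contra h0
    have h0 : μ A = 0 := by simpa using h0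
    have : ∫ ω in B, g₀ ω ∂μ ≤ ∫ ω in B, δ ∂μ := by
      refine setIntegral_mono_on_ae (L1.integrable_coeFn g₀).integrableOn
        (integrable_const _).integrableOn hB ?_
      filter_upwards [measure_eq_zero_iff_ae_notMem.1 h0] with ω h1 h2
      by_contra h3
      exact h1 ⟨h2, (not_le.1 h3).le⟩
    rw [hg₀ B hB, setIntegral_const, smul_eq_mul] at this
    have h1 : μ.real B ≤ μ.real univ := measureReal_mono (subset_univ _)
    have h2 : δ * (2 * (μ.real univ + 1)) = ε := by rw [hδ]; field_simp
    nlinarith [measureReal_nonneg (μ := μ) (s := univ)]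
  obtain ⟨η, hη, hηsum⟩ := ENNReal.exists_pos_sum_of_countable hμA.ne' ℕ
  have hf : ∀ k, ∃ f ∈ T k, dist g₀ f < δ / 2 * η k := fun k =>
    Metric.mem_closure_iff.1 (hcl k) _ (by have := hη k; positivity)
  choose f hfT hfd using hf
  choose w hw hfw using hfT
  let D : ℕ → Set Ω := fun k => {ω | δ / 2 ≤ ‖(g₀ - f k) ω‖}
  have hDm : ∀ k, MeasurableSet (D k) := fun k =>
    measurableSet_le measurable_const (Lp.stronglyMeasurable (g₀ - f k)).measurable.norm
  have hDμ : ∀ k, μ (D k) ≤ η k := by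
    intro k
    have h1 := mul_meas_ge_le_integral_of_nonneg
      (Eventually.of_forall fun ω => norm_nonneg ((g₀ - f k) ω))
      (L1.integrable_coeFn (g₀ - f k)).norm (δ / 2)
    rw [← L1.norm_eq_integral_norm, ← dist_eq_norm] at h1
    have h2 : δ / 2 * μ.real (D k) < δ / 2 * η k := h1.trans_lt (hfd k)
    have h3 : μ.real (D k) ≤ η k := (lt_of_mul_lt_mul_left h2 (by positivity)).le
    rw [measureReal_def] at h3
    rw [← ENNReal.ofReal_toReal (measure_ne_top μ (D k)), ← ENNReal.ofReal_coe_nnreal]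
    exact ENNReal.ofReal_le_ofReal h3
  let A' : Set Ω := A \ ⋃ k, D k
  have hA' : MeasurableSet A' := hA.diff (MeasurableSet.iUnion hDm)
  have hμA' : 0 < μ A' := by
    by_contra h0
    have h0 : μ A' = 0 := by simpa using h0
    have : μ A ≤ μ A' + μ (⋃ k, D k) := by
      refine (measure_mono ?_).trans (measure_union_le _ _)
      intro ω hω
      by_cases h : ω ∈ ⋃ k, D k
      · exact Or.inr h
      · exact Or.inl ⟨hω, h⟩
    rw [h0, zero_add] at this
    have h2 : μ (⋃ k, D k) ≤ ∑' k, (η k : ENNReal) :=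
      (measure_iUnion_le D).trans (ENNReal.tsum_le_tsum hDμ)
    exact absurd (this.trans h2) (not_le.2 hηsum)
  have hlow : ∀ k, ∀ y ∈ avgRange μ ν A', δ / 2 ≤ y (w k) := by
    rintro k y ⟨C, hC, hCA, hμC, rfl⟩
    have hpos : 0 < μ.real C := ENNReal.toReal_pos hμC.ne' (measure_ne_top _ _)
    have h1 : ∫ ω in C, δ / 2 ∂μ ≤ ∫ ω in C, f k ω ∂μ := by
      refine setIntegral_mono_on_ae (integrable_const _).integrableOn
        (L1.integrable_coeFn (f k)).integrableOn hC ?_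
      filter_upwards [Lp.coeFn_sub g₀ (f k)] with ω hω hωC
      have h2 : ω ∉ D k := fun h => (hCA hωC).2 (mem_iUnion.2 ⟨k, h⟩)
      have h3 : δ ≤ g₀ ω := (hCA hωC).1.2
      have h4 : ‖(g₀ - f k) ω‖ < δ / 2 := not_le.1 h2
      rw [hω, Pi.sub_apply, Real.norm_eq_abs, abs_lt] at h4
      linarith [h4.2]
    rw [hfw k C hC, setIntegral_const, smul_eq_mul] at h1
    change δ / 2 ≤ (μ.real C)⁻¹ * ν C (w k)
    rw [inv_mul_eq_div, le_div_iff₀ hpos]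
    linarith
  obtain ⟨x, hx, hxX⟩ := hG A' hA' hμA'
  have hxw : ∀ k, δ / 2 ≤ x (w k) := by
    intro k
    let P : Set (Z →L[ℝ] ℝ) := {y | δ / 2 ≤ y (w k)}
    have hPc : Convex ℝ P := by
      intro y₁ h₁ y₂ h₂ a b ha hb hab
      have h₁' : δ / 2 ≤ y₁ (w k) := h₁
      have h₂' : δ / 2 ≤ y₂ (w k) := h₂
      change δ / 2 ≤ a * y₁ (w k) + b * y₂ (w k)
      have : δ / 2 = a * (δ / 2) + b * (δ / 2) := by rw [← add_mul, hab, one_mul]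
      rw [this]
      gcongr
    have hsub : convexHull ℝ (avgRange μ ν A') ⊆ P := convexHull_min (hlow k) hPc
    have hPcl : @IsClosed _ (wstarTop Z) P := by
      have hcont : @Continuous _ _ (wstarTop Z) _ (fun y : Z →L[ℝ] ℝ => y (w k)) :=
        induced_eval_continuous (fun y : Z →L[ℝ] ℝ => (y : Z → ℝ)) (w k)
      exact @IsClosed.preimage _ _ (wstarTop Z) _ _ hcont _ (isClosed_Ici (a := δ / 2))
    exact @closure_minimal _ (wstarTop Z) _ _ hsub hPcl x hx
  obtain ⟨N, hN⟩ := eventually_atTop.1 ((hz x hxX).eventually_lt_const (half_pos hδpos))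
  have hlt : convexHull ℝ (z '' Ici N) ⊆ {v | x v < δ / 2} := by
    refine convexHull_min ?_ (convex_halfSpace_lt x.toLinearMap.isLinear _)
    rintro _ ⟨n, hn, rfl⟩
    exact hN n hn
  exact absurd (hxw N) (not_le.2 (hlt (hw N)))

/-- If `ν ∈ ca(μ, Z*)` satisfies condition (G), then `ν(B)` is `σ(Z,X)`-sequentially
continuous for every `B ∈ Σ`. -/
theorem seqContinuous_of_condG
    {Ω : Type*} [MeasurableSpace Ω] (μ : Measure Ω) [IsFiniteMeasure μ]
    {Z : Type*} [NormedAddCommGroup Z] [NormedSpace ℝ Z] [CompleteSpace Z]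
    (X : Submodule ℝ (Z →L[ℝ] ℝ)) (hXclosed : IsClosed (X : Set (Z →L[ℝ] ℝ)))
    (hXnorming : IsNorming X)
    (ν : VectorMeasure Ω (Z →L[ℝ] ℝ))
    (hν : ∀ A : Set Ω, μ A = 0 → ν A = 0)
    (hG : CondG μ ν X) :
    ∀ B : Set Ω, MeasurableSet B →
      ∀ (z : ℕ → Z) (z₀ : Z), Tendsto z atTop (@nhds _ (sigmaTop X) z₀) →
        Tendsto (fun n => ν B (z n)) atTop (nhds (ν B z₀)) := by
  intro B hB z z₀ hz
  have hzx : ∀ x ∈ X, Tendsto (fun n => x (z n)) atTop (𝓝 (x z₀)) := by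
    intro x hx
    have hcont : @Continuous _ _ (sigmaTop X) _ (fun v : Z => x v) :=
      induced_eval_continuous (fun v : Z => fun x : X => (x : Z →L[ℝ] ℝ) v) ⟨x, hx⟩
    exact (@Continuous.tendsto _ _ (sigmaTop X) _ _ hcont z₀).comp hz
  have hy : ∀ x ∈ X, Tendsto (fun n => x (z n - z₀)) atTop (𝓝 0) := by
    intro x hx
    simpa using (hzx x hx).sub_const (x z₀)
  have hy' : ∀ x ∈ X, Tendsto (fun n => x (-(z n - z₀))) atTop (𝓝 0) := by
    intro x hx
    simpa using (hy x hx).neg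
  obtain ⟨M, hM⟩ := norm_bdd_of_sigma X hXclosed hXnorming _ hy
  rw [Metric.tendsto_nhds]
  intro ε hε
  filter_upwards [core μ X ν hν hG B hB _ M hM hy ε hε,
    core μ X ν hν hG B hB (fun n => -(z n - z₀)) M (fun n => by rw [norm_neg]; exact hM n) hy' ε hε]
    with n h1 h2
  rw [map_sub] at h1
  rw [map_neg, map_sub] at h2
  rw [Real.dist_eq, abs_lt]
  constructor <;> linarith
end
end

section
/- Let (Ω,Σ,μ) be a finite measure space, Z a real Banach space, X ⊆ Z* a norm-closed subspace which is norming for Z, and K ⊆ Z a set such that the convex hull co(K) is relatively convex block compact in (Z,σ(Z,X)). If ν : Σ → Z* is a countably additive μ-continuous vector measure satisfying condition (G), then for every B ∈ Σ the restriction of the functional ν(B) to K is σ(Z,X)-continuous. -/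
open MeasureTheory Filter Set Topology
open scoped UniformConvergence

noncomputable section

section Helpers

set_option linter.unusedSectionVars false

variable {Ω : Type*} [MeasurableSpace Ω] {μ : Measure Ω} [IsFiniteMeasure μ]

lemma aux_rn (s : SignedMeasure Ω) (hs : ∀ A, MeasurableSet A → μ A = 0 → s A = 0) :
    ∃ F : Lp ℝ 1 μ, ∀ A, MeasurableSet A → ∫ x in A, F x ∂μ = s A := by
  have hac : s ≪ᵥ μ.toENNRealVectorMeasure := by
    refine VectorMeasure.AbsolutelyContinuous.mk fun A hA h => ?_
    rw [Measure.toENNRealVectorMeasure_apply_measurable hA] at h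
    exact hs A hA h
  have hi := SignedMeasure.integrable_rnDeriv s μ
  refine ⟨hi.toL1 _, fun A hA => ?_⟩
  have h1 : ∫ x in A, (hi.toL1 _ : Lp ℝ 1 μ) x ∂μ = ∫ x in A, s.rnDeriv μ x ∂μ :=
    integral_congr_ae (ae_restrict_of_ae hi.coeFn_toL1)
  rw [h1, ← withDensityᵥ_apply hi hA, SignedMeasure.withDensityᵥ_rnDeriv_eq s μ hac]

lemma aux_l1_ext {F G : Lp ℝ 1 μ}
    (h : ∀ A, MeasurableSet A → ∫ x in A, F x ∂μ = ∫ x in A, G x ∂μ) : F = G := by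
  apply Lp.ext
  exact Integrable.ae_eq_of_forall_setIntegral_eq _ _ (L1.integrable_coeFn F)
    (L1.integrable_coeFn G) (fun s hs _ => h s hs)

lemma aux_dual (φ : Lp ℝ 1 μ →L[ℝ] ℝ) :
    ∃ h : Ω → ℝ, Measurable h ∧ (∀ x, |h x| ≤ ‖φ‖) ∧ ∀ F : Lp ℝ 1 μ, φ F = ∫ x, h x * F x ∂μ := by
  classical
  let m : Set Ω → ℝ := fun A =>
    if hA : MeasurableSet A then φ (indicatorConstLp 1 hA (measure_ne_top μ A) (1 : ℝ)) else 0
  have hmA : ∀ A (hA : MeasurableSet A), m A = φ (indicatorConstLp 1 hA (measure_ne_top μ A) (1 : ℝ)) :=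
    fun A hA => by simp [m, hA]
  have hbd : ∀ A, MeasurableSet A → |m A| ≤ ‖φ‖ * μ.real A := by
    intro A hA
    rw [hmA A hA, ← Real.norm_eq_abs]
    refine (φ.le_opNorm _).trans (mul_le_mul_of_nonneg_left ?_ (norm_nonneg _))
    rw [norm_indicatorConstLp one_ne_zero (by simp)]
    simp
  let s : SignedMeasure Ω := VectorMeasure.of_additive_of_le_measure m (μ := ‖φ‖₊ • μ) (by
      intro A
      by_cases hA : MeasurableSet A
      · have := hbd A hA
        rw [Measure.smul_apply, ← ENNReal.ofReal_toReal (measure_ne_top μ A), ← ofReal_norm,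
          ENNReal.smul_def, ← ENNReal.ofReal_coe_nnreal, smul_eq_mul, ← ENNReal.ofReal_mul (by positivity)]
        exact ENNReal.ofReal_le_ofReal this
      · simp [m, hA]) (by
      intro A B hA hB hAB
      rw [hmA _ hA, hmA _ hB, hmA _ (hA.union hB), ← map_add,
        indicatorConstLp_disjoint_union hA hB (measure_ne_top μ A) (measure_ne_top μ B) hAB (1 : ℝ)])
      (by intro A hA; simp [m, hA])
  obtain ⟨F, hF⟩ := aux_rn (μ := μ) s (by
    intro A hA h0
    have := hbd A hA
    simp only [Measure.real, h0, ENNReal.toReal_zero, mul_zero] at this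
    exact abs_nonpos_iff.1 this)
  have hFm : ∀ A (hA : MeasurableSet A), ∫ x in A, F x ∂μ = m A := fun A hA => hF A hA
  have hFi := L1.integrable_coeFn F
  have hle : ∀ᵐ x ∂μ, F x ≤ ‖φ‖ := by
    refine ae_le_of_forall_setIntegral_le hFi (integrable_const _) fun A hA _ => ?_
    rw [hFm A hA, setIntegral_const, smul_eq_mul, mul_comm]
    exact (abs_le.1 (hbd A hA)).2
  have hge : ∀ᵐ x ∂μ, -‖φ‖ ≤ F x := by
    refine ae_le_of_forall_setIntegral_le (integrable_const _) hFi fun A hA _ => ?_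
    rw [hFm A hA, setIntegral_const, smul_eq_mul, mul_neg, mul_comm]
    exact (abs_le.1 (hbd A hA)).1
  let h : Ω → ℝ := fun x => max (min (F x) ‖φ‖) (-‖φ‖)
  have hm : Measurable h :=
    ((Lp.stronglyMeasurable F).measurable.min measurable_const).max measurable_const
  have hhF : h =ᵐ[μ] F := by
    filter_upwards [hle, hge] with x h1 h2
    simp [h, h1, h2]
  have hb : ∀ x, |h x| ≤ ‖φ‖ := fun x => by
    have := norm_nonneg φ
    rw [abs_le]
    exact ⟨le_max_right _ _, max_le (min_le_right _ _) (by linarith)⟩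
  have hGint : ∀ G : Lp ℝ 1 μ, Integrable (fun x => h x * G x) μ := fun G =>
    (L1.integrable_coeFn G).bdd_mul hm.aestronglyMeasurable (ae_of_all _ hb)
  refine ⟨h, hm, hb, ?_⟩
  let ψ : Lp ℝ 1 μ →L[ℝ] ℝ := LinearMap.mkContinuous
    { toFun := fun G => ∫ x, h x * G x ∂μ
      map_add' := by
        intro G H
        rw [← integral_add (hGint G) (hGint H)]
        apply integral_congr_ae
        filter_upwards [Lp.coeFn_add G H] with x hx
        rw [hx, Pi.add_apply]; ring
      map_smul' := by
        intro c G
        rw [RingHom.id_apply, smul_eq_mul, ← integral_const_mul]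
        apply integral_congr_ae
        filter_upwards [Lp.coeFn_smul c G] with x hx
        rw [hx, Pi.smul_apply, smul_eq_mul]; ring } ‖φ‖ (by
      intro G
      rw [L1.norm_eq_integral_norm, ← integral_const_mul]
      refine (norm_integral_le_integral_norm _).trans ?_
      refine integral_mono (hGint G).norm ((L1.integrable_coeFn G).norm.const_mul _) fun x => ?_
      simp only [norm_mul]
      exact mul_le_mul_of_nonneg_right (hb x) (norm_nonneg _))
  have key : φ = ψ := by
    ext G
    refine Lp.induction (p := 1) (by simp) (motive := fun G => φ G = ψ G) ?_ ?_ ?_ G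
    · intro c A hA hAm
      have e1 : (Lp.simpleFunc.indicatorConst 1 hA hAm.ne c : Lp ℝ 1 μ)
          = c • indicatorConstLp 1 hA (measure_ne_top μ A) (1 : ℝ) := by
        rw [Lp.simpleFunc.coe_indicatorConst]
        apply Lp.ext
        filter_upwards [Lp.coeFn_smul c (indicatorConstLp 1 hA (measure_ne_top μ A) (1 : ℝ)),
          indicatorConstLp_coeFn (p := 1) (hs := hA) (hμs := measure_ne_top μ A) (c := (1:ℝ)),
          indicatorConstLp_coeFn (p := 1) (hs := hA) (hμs := measure_ne_top μ A) (c := c)]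
          with x h1 h2 h3
        rw [h3, h1, Pi.smul_apply, h2]
        by_cases hx : x ∈ A <;> simp [hx]
      rw [e1, map_smul, map_smul]
      congr 1
      rw [← hmA, ← hFm A hA, ← integral_indicator hA]
      change _ = ∫ x, _ ∂μ
      apply integral_congr_ae
      filter_upwards [hhF, indicatorConstLp_coeFn (p := 1) (hs := hA) (hμs := measure_ne_top μ A) (c := (1:ℝ))] with x h1 h2
      rw [h1, h2]
      by_cases hx : x ∈ A <;> simp [hx]
    · intro f g hf hg _ h1 h2
      simp only [map_add, h1, h2]
    · exact isClosed_eq φ.continuous ψ.continuous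
  intro G
  rw [key]; rfl

end Helpers

section Helpers2

set_option maxSynthPendingDepth 5
set_option linter.unusedSectionVars false

variable {Ω : Type*} [MeasurableSpace Ω] {μ : Measure Ω} [IsFiniteMeasure μ]
  {Z : Type*} [NormedAddCommGroup Z] [NormedSpace ℝ Z]

lemma aux_exists_T (ν : VectorMeasure Ω (Z →L[ℝ] ℝ))
    (hν : ∀ A : Set Ω, μ A = 0 → ν A = 0) :
    ∃ T : ((Z →L[ℝ] ℝ) →L[ℝ] ℝ) →L[ℝ] Lp ℝ 1 μ,
      ∀ Φ A, MeasurableSet A → ∫ x in A, T Φ x ∂μ = Φ (ν A) := by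
  have h0 : ∀ Φ : (Z →L[ℝ] ℝ) →L[ℝ] ℝ, ∃ F : Lp ℝ 1 μ, ∀ A, MeasurableSet A →
      ∫ x in A, F x ∂μ = Φ (ν A) := by
    intro Φ
    obtain ⟨F, hF⟩ := aux_rn (μ := μ) (ν.mapRange (AddMonoidHomClass.toAddMonoidHom Φ) (by exact Φ.continuous)) (by
      intro A _ h
      change Φ (ν A) = 0
      rw [hν A h, map_zero])
    exact ⟨F, fun A hA => by rw [hF A hA]; rfl⟩
  choose T hT using h0
  let L : ((Z →L[ℝ] ℝ) →L[ℝ] ℝ) →ₗ[ℝ] Lp ℝ 1 μ :=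
    { toFun := T
      map_add' := by
        intro Φ Ψ
        apply aux_l1_ext
        intro A hA
        rw [hT _ A hA, integral_congr_ae (ae_restrict_of_ae (Lp.coeFn_add (T Φ) (T Ψ)))]
        simp only [Pi.add_apply]
        rw [integral_add (L1.integrable_coeFn _).integrableOn
          (L1.integrable_coeFn _).integrableOn, hT _ A hA, hT _ A hA]
        rfl
      map_smul' := by
        intro c Φ
        apply aux_l1_ext
        intro A hA
        rw [hT _ A hA, integral_congr_ae (ae_restrict_of_ae (Lp.coeFn_smul _ (T Φ)))]
        simp only [Pi.smul_apply]
        rw [integral_smul, hT _ A hA]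
        rfl }
  suffices hc : ∀ (u : ℕ → ((Z →L[ℝ] ℝ) →L[ℝ] ℝ)) (x y), Tendsto u atTop (𝓝 x) →
      Tendsto (L ∘ u) atTop (𝓝 y) → y = L x from
    ⟨ContinuousLinearMap.ofSeqClosedGraph (g := L) hc, fun Φ A hA => hT Φ A hA⟩
  intro u Φ G hu hG
  apply aux_l1_ext
  intro A hA
  refine tendsto_nhds_unique (((continuous_setIntegral A).tendsto G).comp hG) ?_
  have h1 : ∀ n, ∫ x in A, (L (u n)) x ∂μ = u n (ν A) := fun n => hT _ A hA
  change Tendsto (fun n => ∫ x in A, (L (u n)) x ∂μ) atTop (𝓝 (∫ x in A, (T Φ) x ∂μ))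
  simp_rw [h1]
  rw [hT Φ A hA]
  exact ((ContinuousLinearMap.apply ℝ ℝ (ν A)).continuous.tendsto Φ).comp hu

lemma aux_simple (ν : VectorMeasure Ω (Z →L[ℝ] ℝ))
    (T : ((Z →L[ℝ] ℝ) →L[ℝ] ℝ) →L[ℝ] Lp ℝ 1 μ)
    (hT : ∀ Φ A, MeasurableSet A → ∫ x in A, T Φ x ∂μ = Φ (ν A)) (g : SimpleFunc Ω ℝ) :
    ∃ ζ : Z →L[ℝ] ℝ, ∀ Φ, ∫ x, g x * T Φ x ∂μ = Φ ζ := by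
  classical
  induction g using SimpleFunc.induction with
  | const c hs =>
    rename_i s
    refine ⟨c • ν s, fun Φ => ?_⟩
    rw [map_smul, ← hT Φ s hs, ← integral_indicator hs, smul_eq_mul, ← integral_const_mul]
    congr 1
    ext x
    by_cases hx : x ∈ s <;> simp [hx]
  | add hfg hf hg =>
    rename_i f g
    obtain ⟨ζ, hζ⟩ := hf
    obtain ⟨ξ, hξ⟩ := hg
    refine ⟨ζ + ξ, fun Φ => ?_⟩
    rw [map_add, ← hζ, ← hξ, ← integral_add]
    · congr 1
      ext x
      simp [add_mul]
    · obtain ⟨C, hC⟩ := f.exists_forall_norm_le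
      exact (L1.integrable_coeFn (T Φ)).bdd_mul f.stronglyMeasurable.aestronglyMeasurable
        (ae_of_all _ hC)
    · obtain ⟨C, hC⟩ := g.exists_forall_norm_le
      exact (L1.integrable_coeFn (T Φ)).bdd_mul g.stronglyMeasurable.aestronglyMeasurable
        (ae_of_all _ hC)

lemma aux_approx (h : Ω → ℝ) (hm : Measurable h) (C : ℝ) (hC : ∀ x, |h x| ≤ C) (δ : ℝ)
    (hδ : 0 < δ) : ∃ g : SimpleFunc Ω ℝ, ∀ x, |h x - g x| ≤ δ := by
  let q : Ω → ℤ := fun x => ⌊h x / δ⌋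
  have hq : Measurable q := (hm.div_const δ).floor
  have hqf : (Set.range q).Finite := by
    refine (Set.finite_Icc ⌊-C / δ⌋ ⌊C / δ⌋).subset ?_
    rintro _ ⟨x, rfl⟩
    have := abs_le.1 (hC x)
    exact ⟨Int.floor_le_floor (by gcongr; exact this.1), Int.floor_le_floor (by gcongr; exact this.2)⟩
  let g0 : SimpleFunc Ω ℤ := ⟨q, fun z => hq (measurableSet_singleton z), hqf⟩
  refine ⟨g0.map (fun n : ℤ => (n : ℝ) * δ), fun x => ?_⟩
  have h1 : (⌊h x / δ⌋ : ℝ) * δ ≤ h x := by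
    rw [← le_div_iff₀ hδ]; exact Int.floor_le _
  have h2 : h x < ((⌊h x / δ⌋ : ℝ) + 1) * δ := by
    rw [← div_lt_iff₀ hδ]; exact Int.lt_floor_add_one _
  change |h x - (⌊h x / δ⌋ : ℝ) * δ| ≤ δ
  rw [abs_le]; constructor <;> linarith

/-- `T` is weak*-to-weak continuous. -/
lemma aux_weak (ν : VectorMeasure Ω (Z →L[ℝ] ℝ))
    (T : ((Z →L[ℝ] ℝ) →L[ℝ] ℝ) →L[ℝ] Lp ℝ 1 μ)
    (hT : ∀ Φ A, MeasurableSet A → ∫ x in A, T Φ x ∂μ = Φ (ν A)) (φ : Lp ℝ 1 μ →L[ℝ] ℝ) :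
    ∃ ζ : Z →L[ℝ] ℝ, ∀ Φ, φ (T Φ) = Φ ζ := by
  obtain ⟨h, hm, hb, hφ⟩ := aux_dual φ
  let ι := NormedSpace.inclusionInDoubleDual ℝ Z
  let ζ : Z →L[ℝ] ℝ := (φ.comp T).comp ι
  refine ⟨ζ, fun Φ => ?_⟩
  have key : ∀ δ > 0, |φ (T Φ) - Φ ζ| ≤ δ * (2 * ‖T‖ * ‖Φ‖) := by
    intro δ hδ
    obtain ⟨g, hg⟩ := aux_approx h hm _ hb δ hδ
    obtain ⟨ξ, hξ⟩ := aux_simple ν T hT g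
    have h1 : ∀ Ψ, |φ (T Ψ) - Ψ ξ| ≤ δ * ‖T‖ * ‖Ψ‖ := by
      intro Ψ
      obtain ⟨C, hC⟩ := g.exists_forall_norm_le
      have i1 : Integrable (fun x => h x * T Ψ x) μ :=
        (L1.integrable_coeFn (T Ψ)).bdd_mul hm.aestronglyMeasurable (ae_of_all _ hb)
      have i2 : Integrable (fun x => g x * T Ψ x) μ :=
        (L1.integrable_coeFn (T Ψ)).bdd_mul g.stronglyMeasurable.aestronglyMeasurable
        (ae_of_all _ hC)
      rw [hφ, ← hξ, ← integral_sub i1 i2, ← Real.norm_eq_abs]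
      calc _ ≤ ∫ x, ‖h x * T Ψ x - g x * T Ψ x‖ ∂μ := norm_integral_le_integral_norm _
        _ ≤ ∫ x, δ * ‖T Ψ x‖ ∂μ := by
            refine integral_mono (i1.sub i2).norm ((L1.integrable_coeFn _).norm.const_mul _)
              fun x => ?_
            simp only [← sub_mul, norm_mul]
            exact mul_le_mul_of_nonneg_right (hg x) (norm_nonneg _)
        _ = δ * ‖T Ψ‖ := by rw [integral_const_mul, L1.norm_eq_integral_norm]
        _ ≤ _ := by
            rw [mul_assoc]
            exact mul_le_mul_of_nonneg_left (T.le_opNorm _) hδ.le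
    have h2 : ‖ζ - ξ‖ ≤ δ * ‖T‖ := by
      refine ContinuousLinearMap.opNorm_le_bound _ (by positivity) fun z => ?_
      refine (h1 (ι z)).trans ?_
      refine mul_le_mul_of_nonneg_left ?_ (by positivity)
      exact NormedSpace.double_dual_bound ℝ Z z
    have h3 : |Φ (ζ - ξ)| ≤ ‖Φ‖ * (δ * ‖T‖) :=
      (Φ.le_opNorm _).trans (mul_le_mul_of_nonneg_left h2 (norm_nonneg _))
    have h4 := h1 Φ
    rw [map_sub] at h3
    rw [abs_le] at *
    constructor <;> linarith
  have h5 : |φ (T Φ) - Φ ζ| ≤ 0 := by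
    have ht : Tendsto (fun δ : ℝ => δ * (2 * ‖T‖ * ‖Φ‖)) (𝓝[>] 0) (𝓝 0) := by
      have : Tendsto (fun δ : ℝ => δ * (2 * ‖T‖ * ‖Φ‖)) (𝓝 0) (𝓝 (0 * (2 * ‖T‖ * ‖Φ‖))) :=
        tendsto_id.mul_const _
      rw [zero_mul] at this
      exact this.mono_left nhdsWithin_le_nhds
    exact ge_of_tendsto ht (eventually_mem_nhdsWithin.mono fun δ hδ => key δ hδ)
  exact sub_eq_zero.1 (abs_nonpos_iff.1 h5)

end Helpers2

section Blocks

lemma aux_block_ge {I : ℕ → Finset ℕ} {a : ℕ → ℝ}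
    (hI : ∀ k, ∀ n ∈ I k, ∀ m ∈ I (k + 1), n < m) (hs : ∀ k, ∑ n ∈ I k, a n = 1) :
    ∀ k, ∀ n ∈ I k, k ≤ n := by
  intro k
  induction k with
  | zero => intro n _; exact Nat.zero_le n
  | succ k ih =>
    intro n hn
    have hne : (I k).Nonempty := by
      rw [Finset.nonempty_iff_ne_empty]
      intro h
      have := hs k
      rw [h] at this
      simp at this
    obtain ⟨m, hm⟩ := hne
    have h1 := ih m hm
    have h2 := hI k m hm n hn
    omega

lemma aux_block_mem {E : Type*} [AddCommGroup E] [Module ℝ E] {g h : ℕ → E}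
    (hb : ConvexBlock g h) {s : Set E} (hs : Convex ℝ s) {k : ℕ} (hk : ∀ n, k ≤ n → g n ∈ s) :
    h k ∈ s := by
  obtain ⟨I, a, hI, ha, hsum, hh⟩ := hb
  rw [hh k]
  exact hs.sum_mem (fun n _ => ha n) (hsum k)
    (fun n hn => hk n (aux_block_ge hI hsum k n hn))

lemma aux_block_tendsto {E : Type*} [NormedAddCommGroup E] [NormedSpace ℝ E] {g h : ℕ → E}
    (hb : ConvexBlock g h) {L : E} (hg : Tendsto g atTop (𝓝 L)) : Tendsto h atTop (𝓝 L) := by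
  rw [Metric.tendsto_atTop'] at *
  intro ε hε
  obtain ⟨N, hN⟩ := hg ε hε
  exact ⟨N, fun k hk => aux_block_mem hb (convex_ball L ε) fun n hn => hN n (by omega)⟩

lemma aux_block_map {E F : Type*} [AddCommGroup E] [Module ℝ E] [AddCommGroup F] [Module ℝ F]
    {g h : ℕ → E} (hb : ConvexBlock g h) (f : E →ₗ[ℝ] F) :
    ConvexBlock (fun n => f (g n)) (fun n => f (h n)) := by
  obtain ⟨I, a, hI, ha, hsum, hh⟩ := hb
  refine ⟨I, a, hI, ha, hsum, fun k => ?_⟩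
  simp [hh k, map_sum]

end Blocks

section Sigma

set_option maxSynthPendingDepth 5

variable {Z : Type*} [NormedAddCommGroup Z] [NormedSpace ℝ Z] {X : Submodule ℝ (Z →L[ℝ] ℝ)}

lemma aux_sigma_tendsto {α : Type*} {l : Filter α} {w : α → Z} {w₀ : Z}
    (h : Tendsto w l (@nhds _ (sigmaTop X) w₀)) (x : Z →L[ℝ] ℝ) (hx : x ∈ X) :
    Tendsto (fun k => x (w k)) l (𝓝 (x w₀)) := by
  unfold sigmaTop at h
  rw [nhds_induced, tendsto_comap_iff, tendsto_pi_nhds] at h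
  exact h ⟨x, hx⟩

lemma aux_bounded (hXclosed : IsClosed (X : Set (Z →L[ℝ] ℝ)))
    (hXnorming : IsNorming X) (K : Set Z)
    (hK : ∀ z : ℕ → Z, (∀ n, z n ∈ convexHull ℝ K) →
      ∃ w : ℕ → Z, ConvexBlock z w ∧
        ∃ w₀ : Z, Tendsto w atTop (@nhds _ (sigmaTop X) w₀)) :
    ∃ M : ℝ, ∀ z ∈ K, ‖z‖ ≤ M := by
  have h1 : ∀ x ∈ X, ∃ C : ℝ, ∀ z ∈ K, x z ≤ C := by
    intro x hx
    by_contra! hcon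
    choose z hzK hz using fun n : ℕ => hcon n
    obtain ⟨w, hb, w₀, hw⟩ := hK z fun n => subset_convexHull ℝ K (hzK n)
    have h2 := aux_sigma_tendsto hw x hx
    have h3 : ∀ k : ℕ, (k : ℝ) ≤ x (w k) := by
      intro k
      refine aux_block_mem (aux_block_map hb x.toLinearMap) (convex_Ici (k : ℝ)) fun n hn => ?_
      have : (k : ℝ) ≤ n := by exact_mod_cast hn
      exact this.trans (hz n).le
    exact not_tendsto_nhds_of_tendsto_atTop
      (tendsto_atTop_mono h3 tendsto_natCast_atTop_atTop) _ h2
  have : CompleteSpace X := hXclosed.completeSpace_coe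
  obtain ⟨c, hc, hn⟩ := hXnorming
  let ev : K → (X →L[ℝ] ℝ) := fun z =>
    (NormedSpace.inclusionInDoubleDual ℝ Z (z : Z)).comp X.subtypeL
  have hev : ∀ (z : K) (x : X), ev z x = (x : Z →L[ℝ] ℝ) z := fun z x => rfl
  have hpt : ∀ x : X, ∃ C, ∀ z : K, ‖ev z x‖ ≤ C := by
    intro x
    obtain ⟨C, hC⟩ := h1 x x.2
    obtain ⟨D, hD⟩ := h1 (-(x : Z →L[ℝ] ℝ)) (X.neg_mem x.2)
    refine ⟨max C D, fun z => ?_⟩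
    rw [hev, Real.norm_eq_abs, abs_le]
    have e1 := hC z z.2
    have e2 := hD z z.2
    change -((x : Z →L[ℝ] ℝ) z) ≤ D at e2
    have e3 := le_max_left C D
    have e4 := le_max_right C D
    constructor <;> linarith
  obtain ⟨Cone, hCone⟩ := banach_steinhaus (E := X) (F := ℝ) (g := ev) hpt
  refine ⟨c⁻¹ * max Cone 0, fun z hz => ?_⟩
  rw [le_inv_mul_iff₀ hc]
  refine (hn z).trans (Real.sSup_le ?_ (le_max_right _ _))
  rintro r ⟨x, hx, hx1, rfl⟩
  have h4 := (ev ⟨z, hz⟩).le_opNorm ⟨x, hx⟩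
  have h5 := hCone ⟨z, hz⟩
  rw [hev] at h4
  refine (le_abs_self _).trans (h4.trans ?_)
  calc _ ≤ ‖ev ⟨z, hz⟩‖ * 1 := mul_le_mul_of_nonneg_left hx1 (norm_nonneg _)
    _ ≤ _ := by rw [mul_one]; exact h5.trans (le_max_left _ _)

end Sigma

section Helpers3

set_option maxSynthPendingDepth 5
set_option linter.unusedSectionVars false

variable {Ω : Type*} [MeasurableSpace Ω] {μ : Measure Ω} [IsFiniteMeasure μ]
  {Z : Type*} [NormedAddCommGroup Z] [NormedSpace ℝ Z] {X : Submodule ℝ (Z →L[ℝ] ℝ)}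

lemma aux_G (ν : VectorMeasure Ω (Z →L[ℝ] ℝ))
    (T : ((Z →L[ℝ] ℝ) →L[ℝ] ℝ) →L[ℝ] Lp ℝ 1 μ)
    (hT : ∀ Φ A, MeasurableSet A → ∫ x in A, T Φ x ∂μ = Φ (ν A))
    (hG : CondG μ ν X) (A : Set Ω) (hA : MeasurableSet A) (hA0 : 0 < μ A) :
    ∃ x ∈ X, ∀ (y : Z) (ε : ℝ),
      (∀ᵐ ω ∂μ, ω ∈ A → ε ≤ T (NormedSpace.inclusionInDoubleDual ℝ Z y) ω) → ε ≤ x y := by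
  obtain ⟨x, hx, hxX⟩ := hG A hA hA0
  refine ⟨x, hxX, fun y ε hy => ?_⟩
  let S : Set (Z →L[ℝ] ℝ) := {w | ε ≤ w y}
  have hSc : @IsClosed _ (wstarTop Z) S := by
    let _ := wstarTop Z
    have h2 : Continuous (fun f : Z →L[ℝ] ℝ => (f : Z → ℝ)) := continuous_induced_dom
    exact isClosed_le continuous_const ((continuous_apply y).comp h2)
  have hSconv : Convex ℝ S := by
    intro f hf g hg a b ha hb hab
    simp only [S, mem_ofPred_eq, add_apply, smul_apply,
      smul_eq_mul] at *
    have e1 := mul_le_mul_of_nonneg_left hf ha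
    have e2 := mul_le_mul_of_nonneg_left hg hb
    have e3 : a * ε + b * ε = ε := by rw [← add_mul, hab, one_mul]
    linarith
  have hsub : avgRange μ ν A ⊆ S := by
    rintro _ ⟨B, hB, hBA, hB0, rfl⟩
    have e1 := hT (NormedSpace.inclusionInDoubleDual ℝ Z y) B hB
    have e2 : ∫ ω in B, ε ∂μ ≤ ∫ ω in B, T (NormedSpace.inclusionInDoubleDual ℝ Z y) ω ∂μ := by
      refine setIntegral_mono_ae_restrict (integrable_const _).integrableOn
        (L1.integrable_coeFn _).integrableOn ?_
      rw [EventuallyLE, ae_restrict_iff' hB]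
      filter_upwards [hy] with ω h hω using h (hBA hω)
    rw [e1, setIntegral_const, smul_eq_mul] at e2
    have hpos : 0 < (μ B).toReal := ENNReal.toReal_pos hB0.ne' (measure_ne_top _ _)
    change ε ≤ (μ B).toReal⁻¹ * (ν B y)
    rw [le_inv_mul_iff₀ hpos]
    exact e2
  exact (@closure_minimal _ (wstarTop Z) _ _ (convexHull_min hsub hSconv) hSc) hx

lemma aux_nonpos (H : Lp ℝ 1 μ)
    (h : ∀ ε > 0, ∀ A, MeasurableSet A → 0 < μ A → (∀ ω ∈ A, ε ≤ H ω) → False) :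
    ∀ᵐ ω ∂μ, H ω ≤ 0 := by
  have h1 : ∀ n : ℕ, ∀ᵐ ω ∂μ, H ω < 1 / ((n : ℝ) + 1) := by
    intro n
    by_contra hcon
    have hm : MeasurableSet {ω | 1 / ((n : ℝ) + 1) ≤ H ω} :=
      measurableSet_le measurable_const (Lp.stronglyMeasurable H).measurable
    refine h (1 / ((n : ℝ) + 1)) (by positivity) _ hm ?_ fun ω hω => hω
    rw [pos_iff_ne_zero]
    intro h0
    apply hcon
    rw [ae_iff]
    simpa using h0
  rw [← ae_all_iff] at h1
  filter_upwards [h1] with ω hω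
  exact ge_of_tendsto tendsto_one_div_add_atTop_nhds_zero_nat
    (Eventually.of_forall fun n => (hω n).le)

lemma aux_seq_le (ν : VectorMeasure Ω (Z →L[ℝ] ℝ))
    (T : ((Z →L[ℝ] ℝ) →L[ℝ] ℝ) →L[ℝ] Lp ℝ 1 μ)
    (hT : ∀ Φ A, MeasurableSet A → ∫ x in A, T Φ x ∂μ = Φ (ν A))
    (hG : CondG μ ν X) (y : ℕ → Z) (hy : ∀ x ∈ X, Tendsto (fun k => x (y k)) atTop (𝓝 0))
    (H : Lp ℝ 1 μ)
    (hH : Tendsto (fun k => T (NormedSpace.inclusionInDoubleDual ℝ Z (y k))) atTop (𝓝 H)) :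
    ∀ᵐ ω ∂μ, H ω ≤ 0 := by
  refine aux_nonpos H fun ε hε A hA hA0 hAε => ?_
  obtain ⟨ns, hns, hae⟩ := (tendstoInMeasure_of_tendsto_Lp hH).exists_seq_tendsto_ae
  have hApos : 0 < (μ A).toReal := ENNReal.toReal_pos hA0.ne' (measure_ne_top _ _)
  obtain ⟨t, htA, htm, htμ, hu⟩ := tendstoUniformlyOn_of_ae_tendsto (s := A)
    (fun n => Lp.stronglyMeasurable (T (NormedSpace.inclusionInDoubleDual ℝ Z (y (ns n)))))
    (Lp.stronglyMeasurable H) hA (measure_ne_top μ A)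
    (hae.mono fun ω h _ => h) (half_pos hApos)
  have hpos : 0 < μ (A \ t) := by
    rw [pos_iff_ne_zero]
    intro h0
    have h1 : μ A ≤ μ t := by
      rw [← sdiff_union_of_subset htA]
      exact (measure_union_le _ _).trans (by rw [h0, zero_add])
    have h2 := ENNReal.toReal_mono (by simp) (h1.trans htμ)
    rw [ENNReal.toReal_ofReal (half_pos hApos).le] at h2
    linarith
  obtain ⟨x, hxX, hx⟩ := aux_G ν T hT hG (A \ t) (hA.diff htm) hpos
  rw [Metric.tendstoUniformlyOn_iff] at hu
  have e1 := hu (ε / 2) (half_pos hε)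
  have e2 : ∀ᶠ n in atTop, ε / 2 ≤ x (y (ns n)) := by
    filter_upwards [e1] with n hn
    refine hx _ _ (ae_of_all _ fun ω hω => ?_)
    have e3 := hn ω hω
    have e4 := hAε ω hω.1
    rw [Real.dist_eq, abs_lt] at e3
    linarith [e3.2]
  have e5 := ge_of_tendsto ((hy x hxX).comp hns.tendsto_atTop) e2
  linarith

lemma aux_seq (ν : VectorMeasure Ω (Z →L[ℝ] ℝ))
    (T : ((Z →L[ℝ] ℝ) →L[ℝ] ℝ) →L[ℝ] Lp ℝ 1 μ)
    (hT : ∀ Φ A, MeasurableSet A → ∫ x in A, T Φ x ∂μ = Φ (ν A))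
    (hG : CondG μ ν X) (w : ℕ → Z) (w₀ : Z)
    (hw : ∀ x ∈ X, Tendsto (fun k => x (w k)) atTop (𝓝 (x w₀)))
    (G : Lp ℝ 1 μ)
    (hH : Tendsto (fun k => T (NormedSpace.inclusionInDoubleDual ℝ Z (w k))) atTop (𝓝 G)) :
    T (NormedSpace.inclusionInDoubleDual ℝ Z w₀) = G := by
  have h1 := aux_seq_le ν T hT hG (fun k => w k - w₀) (by
    intro x hx
    have := (hw x hx).sub_const (x w₀)
    simpa using this) (G - T (NormedSpace.inclusionInDoubleDual ℝ Z w₀)) (by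
    simp only [map_sub]
    exact hH.sub_const _)
  have h2 := aux_seq_le ν T hT hG (fun k => w₀ - w k) (by
    intro x hx
    have := (hw x hx).const_sub (x w₀)
    simpa using this) (T (NormedSpace.inclusionInDoubleDual ℝ Z w₀) - G) (by
    simp only [map_sub]
    exact hH.const_sub _)
  apply Lp.ext
  filter_upwards [h1, h2, Lp.coeFn_sub G (T (NormedSpace.inclusionInDoubleDual ℝ Z w₀)),
    Lp.coeFn_sub (T (NormedSpace.inclusionInDoubleDual ℝ Z w₀)) G] with ω a1 a2 a3 a4
  rw [a3, Pi.sub_apply] at a1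
  rw [a4, Pi.sub_apply] at a2
  linarith

/-- Mazur step. -/
lemma aux_mazur (ν : VectorMeasure Ω (Z →L[ℝ] ℝ))
    (T : ((Z →L[ℝ] ℝ) →L[ℝ] ℝ) →L[ℝ] Lp ℝ 1 μ)
    (hT : ∀ Φ A, MeasurableSet A → ∫ x in A, T Φ x ∂μ = Φ (ν A))
    (K : Set Z) (U : Ultrafilter Z) (hUK : K ∈ U) (Λ : (Z →L[ℝ] ℝ) →L[ℝ] ℝ)
    (hΛ : ∀ ζ : Z →L[ℝ] ℝ, Tendsto (fun z => ζ z) U (𝓝 (Λ ζ))) (x : Z →L[ℝ] ℝ) :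
    ∃ z : ℕ → Z, (∀ n, z n ∈ convexHull ℝ K) ∧
      Tendsto (fun n => T (NormedSpace.inclusionInDoubleDual ℝ Z (z n))) atTop (𝓝 (T Λ)) ∧
      Tendsto (fun n => x (z n)) atTop (𝓝 (Λ x)) := by
  let J : Z →L[ℝ] (Lp ℝ 1 μ × ℝ) := (T.comp (NormedSpace.inclusionInDoubleDual ℝ Z)).prod x
  have hJ : ∀ z, J z = (T (NormedSpace.inclusionInDoubleDual ℝ Z z), x z) := fun z => rfl
  have hmem : (T Λ, Λ x) ∈ closure (J '' convexHull ℝ K) := by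
    by_contra hcon
    have hconv : Convex ℝ (closure (J '' convexHull ℝ K)) :=
      ((convex_convexHull ℝ K).is_linear_image J.toLinearMap.isLinear).closure
    obtain ⟨f, u, hf1, hf2⟩ := geometric_hahn_banach_closed_point hconv isClosed_closure hcon
    let φ : Lp ℝ 1 μ →L[ℝ] ℝ := f.comp (ContinuousLinearMap.inl ℝ _ _)
    let r : ℝ := f (0, 1)
    have hf : ∀ (F : Lp ℝ 1 μ) (s : ℝ), f (F, s) = φ F + r * s := by
      intro F s
      have : (F, s) = (F, (0 : ℝ)) + s • ((0 : Lp ℝ 1 μ), (1 : ℝ)) := by simp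
      rw [this, map_add, map_smul, smul_eq_mul, mul_comm s]
      rfl
    obtain ⟨ζ, hζ⟩ := aux_weak ν T hT φ
    have h1 : ∀ᶠ z in (U : Filter Z), f (J z) < u := by
      filter_upwards [hUK] with z hz
      exact hf1 _ (subset_closure ⟨z, subset_convexHull ℝ K hz, rfl⟩)
    have h2 : Tendsto (fun z => f (J z)) U (𝓝 (f (T Λ, Λ x))) := by
      simp only [hJ, hf, hζ]
      exact (hΛ ζ).add ((hΛ x).const_mul r)
    have h3 := le_of_tendsto h2 (h1.mono fun z hz => hz.le)
    linarith
  rw [mem_closure_iff_seq_limit] at hmem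
  obtain ⟨v, hv, hlim⟩ := hmem
  choose z hz hzv using hv
  refine ⟨z, hz, ?_, ?_⟩
  · have := (continuous_fst.tendsto _).comp hlim
    refine this.congr fun n => ?_
    simp [← hzv, hJ]
  · have := (continuous_snd.tendsto _).comp hlim
    refine this.congr fun n => ?_
    simp [← hzv, hJ]

lemma aux_alaoglu (K : Set Z) (U : Ultrafilter Z) (hUK : K ∈ U) (M : ℝ) (hM : ∀ z ∈ K, ‖z‖ ≤ M) :
    ∃ Λ : (Z →L[ℝ] ℝ) →L[ℝ] ℝ, ∀ ζ : Z →L[ℝ] ℝ, Tendsto (fun z => ζ z) U (𝓝 (Λ ζ)) := by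
  let ι : Z → WeakDual ℝ (Z →L[ℝ] ℝ) :=
    fun z => StrongDual.toWeakDual (NormedSpace.inclusionInDoubleDual ℝ Z z)
  have hc := WeakDual.isCompact_closedBall (𝕜 := ℝ) (E := Z →L[ℝ] ℝ) 0 M
  obtain ⟨Λ, -, hΛ⟩ := hc.ultrafilter_le_nhds (U.map ι) (by
    rw [le_principal_iff]
    change ι ⁻¹' _ ∈ U
    filter_upwards [hUK] with z hz
    change NormedSpace.inclusionInDoubleDual ℝ Z z ∈ Metric.closedBall _ _
    rw [mem_closedBall_zero_iff]
    exact (NormedSpace.double_dual_bound ℝ Z z).trans (hM z hz))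
  refine ⟨WeakDual.toStrongDual Λ, fun ζ => ?_⟩
  have h1 : Tendsto ι U (𝓝 Λ) := hΛ
  exact ((WeakDual.eval_continuous ζ).tendsto Λ).comp h1

lemma aux_main (ν : VectorMeasure Ω (Z →L[ℝ] ℝ)) (hν : ∀ A : Set Ω, μ A = 0 → ν A = 0)
    (hG : CondG μ ν X) (K : Set Z)
    (hK : ∀ z : ℕ → Z, (∀ n, z n ∈ convexHull ℝ K) →
      ∃ w : ℕ → Z, ConvexBlock z w ∧
        ∃ w₀ : Z, Tendsto w atTop (@nhds _ (sigmaTop X) w₀))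
    (U : Ultrafilter Z) (hUK : K ∈ U) (z : Z) (Λ : (Z →L[ℝ] ℝ) →L[ℝ] ℝ)
    (hΛ : ∀ ζ : Z →L[ℝ] ℝ, Tendsto (fun z => ζ z) U (𝓝 (Λ ζ)))
    (hz : ∀ x ∈ X, Λ x = x z) (B : Set Ω) (hB : MeasurableSet B) : Λ (ν B) = ν B z := by
  obtain ⟨T, hT⟩ := aux_exists_T ν hν
  have h1 : ∀ x ∈ X, ∃ w : Z, x w = x z ∧ T (NormedSpace.inclusionInDoubleDual ℝ Z w) = T Λ := by
    intro x hx
    obtain ⟨v, hv, hv1, hv2⟩ := aux_mazur ν T hT K U hUK Λ hΛ x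
    obtain ⟨w, hb, w₀, hw⟩ := hK v hv
    refine ⟨w₀, ?_, ?_⟩
    · rw [← hz x hx]
      exact tendsto_nhds_unique (aux_sigma_tendsto hw x hx)
        (aux_block_tendsto (aux_block_map hb x.toLinearMap) hv2)
    · exact aux_seq ν T hT hG w w₀ (aux_sigma_tendsto hw) _ (aux_block_tendsto
        (aux_block_map hb (T.comp (NormedSpace.inclusionInDoubleDual ℝ Z)).toLinearMap) hv1)
  have h2 : ∀ᵐ ω ∂μ, (T Λ - T (NormedSpace.inclusionInDoubleDual ℝ Z z) : Lp ℝ 1 μ) ω ≤ 0 := by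
    refine aux_nonpos _ fun ε hε A hA hA0 hAε => ?_
    obtain ⟨x, hxX, hx⟩ := aux_G ν T hT hG A hA hA0
    obtain ⟨w, hw1, hw2⟩ := h1 x hxX
    have := hx (w - z) ε (ae_of_all _ fun ω hω => by
      rw [map_sub, map_sub, hw2]; exact hAε ω hω)
    rw [map_sub, hw1] at this
    linarith
  have h3 : ∀ᵐ ω ∂μ, (T (NormedSpace.inclusionInDoubleDual ℝ Z z) - T Λ : Lp ℝ 1 μ) ω ≤ 0 := by
    refine aux_nonpos _ fun ε hε A hA hA0 hAε => ?_
    obtain ⟨x, hxX, hx⟩ := aux_G ν T hT hG A hA hA0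
    obtain ⟨w, hw1, hw2⟩ := h1 x hxX
    have := hx (z - w) ε (ae_of_all _ fun ω hω => by
      rw [map_sub, map_sub, hw2]; exact hAε ω hω)
    rw [map_sub, hw1] at this
    linarith
  have h4 : T Λ = T (NormedSpace.inclusionInDoubleDual ℝ Z z) := by
    apply Lp.ext
    filter_upwards [h2, h3, Lp.coeFn_sub (T Λ) (T (NormedSpace.inclusionInDoubleDual ℝ Z z)),
      Lp.coeFn_sub (T (NormedSpace.inclusionInDoubleDual ℝ Z z)) (T Λ)] with ω a1 a2 a3 a4
    rw [a3, Pi.sub_apply] at a1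
    rw [a4, Pi.sub_apply] at a2
    linarith
  rw [← hT Λ B hB, h4, hT _ B hB]
  rfl

end Helpers3

/-- If `co(K)` is relatively convex block compact in `(Z, σ(Z,X))` and `ν ∈ ca(μ, Z*)`
satisfies condition (G), then the restriction `ν(B)|_K` is `σ(Z,X)`-continuous for
every `B ∈ Σ`. -/
theorem continuousOn_of_convexBlockCompact_hull_of_condG
    {Ω : Type*} [MeasurableSpace Ω] (μ : Measure Ω) [IsFiniteMeasure μ]
    {Z : Type*} [NormedAddCommGroup Z] [NormedSpace ℝ Z] [CompleteSpace Z]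
    (X : Submodule ℝ (Z →L[ℝ] ℝ)) (hXclosed : IsClosed (X : Set (Z →L[ℝ] ℝ)))
    (hXnorming : IsNorming X)
    (K : Set Z)
    (hK : ∀ z : ℕ → Z, (∀ n, z n ∈ convexHull ℝ K) →
      ∃ w : ℕ → Z, ConvexBlock z w ∧
        ∃ w₀ : Z, Tendsto w atTop (@nhds _ (sigmaTop X) w₀))
    (ν : VectorMeasure Ω (Z →L[ℝ] ℝ))
    (hν : ∀ A : Set Ω, μ A = 0 → ν A = 0)
    (hG : CondG μ ν X) :
    ∀ B : Set Ω, MeasurableSet B →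
      @ContinuousOn Z ℝ (sigmaTop X) _ (fun z => ν B z) K := by

  intro B hB z hz
  obtain ⟨M, hM⟩ := aux_bounded hXclosed hXnorming K hK
  unfold ContinuousWithinAt
  rw [tendsto_iff_ultrafilter]
  intro U hU
  have hUK : K ∈ U := hU (@self_mem_nhdsWithin _ (sigmaTop X) z K)
  have hUz : Tendsto (fun z => z) (U : Filter Z) (@nhds _ (sigmaTop X) z) :=
    le_trans hU (@nhdsWithin_le_nhds _ (sigmaTop X) z K)
  obtain ⟨Λ, hΛ⟩ := aux_alaoglu K U hUK M hM
  have h1 := aux_main ν hν hG K hK U hUK z Λ hΛ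
    (fun x hx => tendsto_nhds_unique (hΛ x) (aux_sigma_tendsto hUz x hx)) B hB
  change Tendsto (fun z => ν B z) _ (𝓝 (ν B z))
  rw [← h1]
  exact hΛ (ν B)
end
end

section
/- Let (Ω,Σ,μ) be a finite measure space and (g_n) a uniformly integrable sequence in L¹(μ) for which there exist ε > 0 and B ∈ Σ with μ(B) > 0 such that ∫_B g_n dμ ≥ ε for all n ∈ ℕ. Then there exist a convex block subsequence (h_k) of (g_n), a real number η > 0, and A ∈ Σ with A ⊆ B and μ(A) > 0, such that h_k ≥ η on A for all k ∈ ℕ. -/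
open MeasureTheory Filter Set Topology
open scoped UniformConvergence

noncomputable section

lemma phi_gap (x y t K : ℝ) (ht : 0 < t) (hxy : t < |x - y|)
    (ha : √(1 + x ^ 2) < K) (hb : √(1 + y ^ 2) < K) :
    t ^ 2 / (4 * K ^ 3) ≤ √(1 + x ^ 2) + √(1 + y ^ 2) - 2 * √(1 + ((x + y) / 2) ^ 2) := by
  set a := √(1 + x ^ 2) with hadef
  set b := √(1 + y ^ 2) with hbdef
  set m := √(1 + ((x + y) / 2) ^ 2) with hmdef
  have ha0 : 0 < a := Real.sqrt_pos.2 (by positivity)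
  have hb0 : 0 < b := Real.sqrt_pos.2 (by positivity)
  have hm0 : 0 < m := Real.sqrt_pos.2 (by positivity)
  have ha2 : a ^ 2 = 1 + x ^ 2 := Real.sq_sqrt (by positivity)
  have hb2 : b ^ 2 = 1 + y ^ 2 := Real.sq_sqrt (by positivity)
  have hm2 : m ^ 2 = 1 + ((x + y) / 2) ^ 2 := Real.sq_sqrt (by positivity)
  have hK : 0 < K := ha0.trans ha
  have hsq : t ^ 2 ≤ (x - y) ^ 2 := by
    rw [← sq_abs (x - y)]; gcongr
  have hprod : (a * b - (1 + x * y)) * (a * b + (1 + x * y)) = (x - y) ^ 2 := by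
    have : (a * b) ^ 2 = (1 + x ^ 2) * (1 + y ^ 2) := by rw [mul_pow, ha2, hb2]
    nlinarith
  have hle : |1 + x * y| ≤ a * b := by
    apply abs_le_of_sq_le_sq _ (by positivity)
    rw [mul_pow, ha2, hb2]; nlinarith [sq_nonneg (x - y)]
  have h1 := (abs_le.1 hle).1
  have h2 := (abs_le.1 hle).2
  have hq : t ^ 2 ≤ (a * b - (1 + x * y)) * (2 * K ^ 2) := by
    have hab : a * b ≤ K ^ 2 := by nlinarith
    calc t ^ 2 ≤ _ := hsq
      _ = _ := hprod.symm
      _ ≤ _ := by gcongr <;> nlinarith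
  have hd : (a + b - 2 * m) * (a + b + 2 * m) = 2 * (a * b - (1 + x * y)) := by
    nlinarith
  have hd0 : 0 ≤ a + b - 2 * m := by
    by_contra hneg
    push Not at hneg
    have : (a + b - 2 * m) * (a + b + 2 * m) < 0 := mul_neg_of_neg_of_pos hneg (by positivity)
    linarith
  have hs : (a + b - 2 * m) * (a + b + 2 * m) ≤ (a + b - 2 * m) * (4 * K) := by
    gcongr; linarith
  rw [div_le_iff₀ (by positivity)]
  have h3 : (a * b - (1 + x * y)) * (2 * K ^ 2) ≤ ((a + b - 2 * m) * (2 * K)) * (2 * K ^ 2) := by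
    gcongr; linarith
  nlinarith

lemma phi_le (x : ℝ) : √(1 + x ^ 2) ≤ 1 + |x| := by
  rw [Real.sqrt_le_left (by positivity)]
  nlinarith [sq_abs x, abs_nonneg x]

lemma phi_int {Ω : Type*} [MeasurableSpace Ω] (μ : Measure Ω) [IsFiniteMeasure μ]
    (x : Ω → ℝ) (hx : Integrable x μ) : Integrable (fun ω => √(1 + x ω ^ 2)) μ := by
  refine Integrable.mono' (g := fun ω => 1 + |x ω|) ((integrable_const 1).add hx.abs) ?_ ?_
  · have : Continuous fun r : ℝ => √(1 + r ^ 2) := by fun_prop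
    exact this.comp_aestronglyMeasurable hx.1
  · refine Eventually.of_forall fun ω => ?_
    rw [Real.norm_of_nonneg (Real.sqrt_nonneg _)]
    exact phi_le _

lemma phi_int_le {Ω : Type*} [MeasurableSpace Ω] (μ : Measure Ω) [IsFiniteMeasure μ]
    (x : Ω → ℝ) (hx : Integrable x μ) :
    ∫ ω, √(1 + x ω ^ 2) ∂μ ≤ μ.real univ + ∫ ω, |x ω| ∂μ := by
  calc _ ≤ ∫ ω, (1 + |x ω|) ∂μ :=
        integral_mono (phi_int μ x hx) ((integrable_const 1).add hx.abs) fun ω => phi_le _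
    _ = _ := by
        rw [integral_add (integrable_const 1) hx.abs]; simp

lemma key {Ω : Type*} [MeasurableSpace Ω] (μ : Measure Ω) [IsFiniteMeasure μ]
    (M τ δ : ℝ) (hM : 0 ≤ M) (hτ : 0 < τ) (hδ : 0 < δ) :
    ∃ e > (0 : ℝ), ∀ x y : Ω → ℝ, Integrable x μ → Integrable y μ →
      ∫ ω, |x ω| ∂μ ≤ M → ∫ ω, |y ω| ∂μ ≤ M →
      (∀ A, MeasurableSet A → μ A ≤ ENNReal.ofReal δ → ∫ ω in A, |x ω| ∂μ ≤ τ / 4) →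
      (∀ A, MeasurableSet A → μ A ≤ ENNReal.ofReal δ → ∫ ω in A, |y ω| ∂μ ≤ τ / 4) →
      ∫ ω, √(1 + x ω ^ 2) ∂μ + ∫ ω, √(1 + y ω ^ 2) ∂μ
        - 2 * ∫ ω, √(1 + ((x ω + y ω) / 2) ^ 2) ∂μ ≤ 4 * e →
      ∫ ω, |x ω - y ω| ∂μ ≤ τ := by
  set m := μ.real univ with hm
  have hm0 : 0 ≤ m := measureReal_nonneg
  set t := τ / (2 * (m + 1)) with ht
  have ht0 : 0 < t := by positivity
  set K := 3 * (m + M + 1) / δ with hK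
  have hK0 : 0 < K := by positivity
  set κ := t ^ 2 / (4 * K ^ 3) with hκ
  have hκ0 : 0 < κ := by positivity
  refine ⟨κ * δ / 12, by positivity, ?_⟩
  intro x y hx hy hxM hyM hxU hyU hgap
  have hpx := phi_int μ x hx
  have hpy := phi_int μ y hy
  have hmid : Integrable (fun ω => (x ω + y ω) / 2) μ := (hx.add hy).div_const 2
  have hpm := phi_int μ _ hmid
  set d : Ω → ℝ := fun ω => √(1 + x ω ^ 2) + √(1 + y ω ^ 2) - 2 * √(1 + ((x ω + y ω) / 2) ^ 2)
    with hd
  have hdint : Integrable d μ := (hpx.add hpy).sub (hpm.const_mul 2)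
  have hdI : ∫ ω, d ω ∂μ ≤ κ * δ / 3 := by
    have : ∫ ω, d ω ∂μ = ∫ ω, √(1 + x ω ^ 2) ∂μ + ∫ ω, √(1 + y ω ^ 2) ∂μ
        - 2 * ∫ ω, √(1 + ((x ω + y ω) / 2) ^ 2) ∂μ := by
      simp only [hd]
      have hadd : Integrable (fun ω => √(1 + x ω ^ 2) + √(1 + y ω ^ 2)) μ := hpx.add hpy
      rw [integral_sub hadd (hpm.const_mul 2), integral_add hpx hpy, integral_const_mul]
    linarith
  have hd0 : ∀ ω, 0 ≤ d ω := by
    intro ω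
    by_cases h : x ω = y ω
    · simp only [hd, h]
      have : (y ω + y ω) / 2 = y ω := by ring
      rw [this]; linarith
    · have hpos : 0 < |x ω - y ω| := abs_pos.2 (sub_ne_zero.2 h)
      have hh := phi_gap (x ω) (y ω) (|x ω - y ω| / 2)
        (√(1 + x ω ^ 2) + √(1 + y ω ^ 2) + 1) (by positivity) (by linarith)
        (by linarith [Real.sqrt_nonneg (1 + y ω ^ 2)])
        (by linarith [Real.sqrt_nonneg (1 + x ω ^ 2)])
      refine le_trans ?_ hh
      positivity
  set S1 := {ω | K ≤ √(1 + x ω ^ 2)}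
  set S2 := {ω | K ≤ √(1 + y ω ^ 2)}
  set S3 := {ω | κ ≤ d ω}
  have m1 : μ.real S1 ≤ δ / 3 := by
    have h1 := mul_meas_ge_le_integral_of_nonneg
      (Eventually.of_forall fun ω => Real.sqrt_nonneg (1 + x ω ^ 2)) hpx K
    have h2 := phi_int_le μ x hx
    have h3 : K * μ.real S1 ≤ K * (δ / 3) := by
      have : K * (δ / 3) = m + M + 1 := by rw [hK]; field_simp
      rw [this]; refine h1.trans ?_; linarith
    exact le_of_mul_le_mul_left h3 hK0
  have m2 : μ.real S2 ≤ δ / 3 := by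
    have h1 := mul_meas_ge_le_integral_of_nonneg
      (Eventually.of_forall fun ω => Real.sqrt_nonneg (1 + y ω ^ 2)) hpy K
    have h2 := phi_int_le μ y hy
    have h3 : K * μ.real S2 ≤ K * (δ / 3) := by
      have : K * (δ / 3) = m + M + 1 := by rw [hK]; field_simp
      rw [this]; refine h1.trans ?_; linarith
    exact le_of_mul_le_mul_left h3 hK0
  have m3 : μ.real S3 ≤ δ / 3 := by
    have h1 := mul_meas_ge_le_integral_of_nonneg (Eventually.of_forall hd0) hdint κ
    have h3 : κ * μ.real S3 ≤ κ * (δ / 3) := by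
      refine h1.trans ?_; linarith
    exact le_of_mul_le_mul_left h3 hκ0
  set A := toMeasurable μ (S1 ∪ S2 ∪ S3) with hA
  have hAm : MeasurableSet A := measurableSet_toMeasurable _ _
  have hAδ : μ A ≤ ENNReal.ofReal δ := by
    rw [hA, measure_toMeasurable, ← ofReal_measureReal]
    apply ENNReal.ofReal_le_ofReal
    have := measureReal_union_le (μ := μ) (S1 ∪ S2) S3
    have := measureReal_union_le (μ := μ) S1 S2
    linarith
  have hsub : S1 ∪ S2 ∪ S3 ⊆ A := subset_toMeasurable _ _
  have hInt : Integrable (fun ω => |x ω - y ω|) μ := (hx.sub hy).abs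
  rw [← integral_add_compl hAm hInt]
  have hI1 : ∫ ω in A, |x ω - y ω| ∂μ ≤ τ / 4 + τ / 4 := by
    calc _ ≤ ∫ ω in A, (|x ω| + |y ω|) ∂μ :=
          integral_mono hInt.integrableOn (hx.abs.add hy.abs).integrableOn fun ω => abs_sub _ _
      _ = ∫ ω in A, |x ω| ∂μ + ∫ ω in A, |y ω| ∂μ :=
          integral_add hx.abs.integrableOn hy.abs.integrableOn
      _ ≤ _ := add_le_add (hxU A hAm hAδ) (hyU A hAm hAδ)
  have hI2 : ∫ ω in Aᶜ, |x ω - y ω| ∂μ ≤ τ / 2 := by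
    calc _ ≤ ∫ ω in Aᶜ, t ∂μ := by
          refine setIntegral_mono_on hInt.integrableOn (integrable_const t).integrableOn
            hAm.compl fun ω hω => ?_
          have hωn : ω ∉ S1 ∪ S2 ∪ S3 := fun h => hω (hsub h)
          simp only [mem_union, not_or] at hωn
          obtain ⟨⟨h1, h2⟩, h3⟩ := hωn
          by_contra hc
          push Not at hc
          exact h3 (phi_gap _ _ t K ht0 hc (not_le.1 h1) (not_le.1 h2))
      _ = μ.real Aᶜ * t := by simp
      _ ≤ (m + 1) * t := by
          gcongr
          have : μ.real Aᶜ ≤ m := measureReal_mono (subset_univ _)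
          linarith
      _ = τ / 2 := by rw [ht]; field_simp
  linarith

/-- tail convex weights -/
def TailW (N : ℕ) : Set (ℕ →₀ ℝ) :=
  {w | (∀ n, 0 ≤ w n) ∧ (∀ n, n < N → w n = 0) ∧
    Finsupp.linearCombination ℝ (fun _ : ℕ => (1 : ℝ)) w = 1}

lemma TailW_mid {N : ℕ} {u v : ℕ →₀ ℝ} (hu : u ∈ TailW N) (hv : v ∈ TailW N) :
    (1 / 2 : ℝ) • (u + v) ∈ TailW N := by
  obtain ⟨h1, h2, h3⟩ := hu
  obtain ⟨k1, k2, k3⟩ := hv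
  refine ⟨fun n => ?_, fun n hn => ?_, ?_⟩
  · have := h1 n; have := k1 n
    simp only [Finsupp.smul_apply, Finsupp.add_apply, smul_eq_mul]; linarith
  · simp [h2 n hn, k2 n hn]
  · rw [map_smul, map_add, h3, k3]; norm_num

lemma TailW_mono {N R : ℕ} (h : N ≤ R) : TailW R ⊆ TailW N :=
  fun _ hw => ⟨hw.1, fun n hn => hw.2.1 n (hn.trans_le h), hw.2.2⟩

lemma TailW_sum {N : ℕ} {w : ℕ →₀ ℝ} (hw : w ∈ TailW N) : ∑ n ∈ w.support, w n = 1 := by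
  have := hw.2.2
  simpa [Finsupp.linearCombination_apply, Finsupp.sum] using this

lemma comb_apply {Ω : Type*} (g : ℕ → Ω → ℝ) (w : ℕ →₀ ℝ) :
    Finsupp.linearCombination ℝ g w = fun ω => ∑ n ∈ w.support, w n * g n ω := by
  ext ω
  simp [Finsupp.linearCombination_apply, Finsupp.sum, Finset.sum_apply]

lemma comb_int {Ω : Type*} [MeasurableSpace Ω] (μ : Measure Ω)
    (g : ℕ → Ω → ℝ) (hgint : ∀ n, Integrable (g n) μ) (w : ℕ →₀ ℝ) :
    Integrable (Finsupp.linearCombination ℝ g w) μ := by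
  rw [comb_apply]
  exact integrable_finsetSum _ fun n _ => (hgint n).const_mul _

lemma comb_abs_le {Ω : Type*} [MeasurableSpace Ω] (μ : Measure Ω)
    (g : ℕ → Ω → ℝ) (hgint : ∀ n, Integrable (g n) μ) {N : ℕ} {w : ℕ →₀ ℝ} (hw : w ∈ TailW N)
    (c : ℝ) (hc : ∀ n, ∫ ω, |g n ω| ∂μ ≤ c) :
    ∫ ω, |Finsupp.linearCombination ℝ g w ω| ∂μ ≤ c := by
  calc _ ≤ ∫ ω, ∑ n ∈ w.support, w n * |g n ω| ∂μ := by
        refine integral_mono (comb_int μ g hgint w).abs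
          (integrable_finsetSum _ fun n _ => (hgint n).abs.const_mul _) fun ω => ?_
        simp only [comb_apply]
        refine (Finset.abs_sum_le_sum_abs _ _).trans (Finset.sum_le_sum fun n _ => ?_)
        rw [abs_mul, abs_of_nonneg (hw.1 n)]
    _ = ∑ n ∈ w.support, w n * ∫ ω, |g n ω| ∂μ := by
        rw [integral_finsetSum _ fun n _ => (hgint n).abs.const_mul _]
        simp only [integral_const_mul]
    _ ≤ ∑ n ∈ w.support, w n * c :=
        Finset.sum_le_sum fun n _ => mul_le_mul_of_nonneg_left (hc n) (hw.1 n)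
    _ = c := by rw [← Finset.sum_mul, TailW_sum hw, one_mul]

lemma comb_ge {Ω : Type*} [MeasurableSpace Ω] (μ : Measure Ω)
    (g : ℕ → Ω → ℝ) (hgint : ∀ n, Integrable (g n) μ) {N : ℕ} {w : ℕ →₀ ℝ} (hw : w ∈ TailW N)
    (c : ℝ) (hc : ∀ n, c ≤ ∫ ω, g n ω ∂μ) :
    c ≤ ∫ ω, Finsupp.linearCombination ℝ g w ω ∂μ := by
  simp only [comb_apply]
  rw [integral_finsetSum _ fun n _ => (hgint n).const_mul _]
  simp only [integral_const_mul]
  calc c = ∑ n ∈ w.support, w n * c := by rw [← Finset.sum_mul, TailW_sum hw, one_mul]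
    _ ≤ _ := Finset.sum_le_sum fun n _ => mul_le_mul_of_nonneg_left (hc n) (hw.1 n)

lemma exists_cauchy {Ω : Type*} [MeasurableSpace Ω] (μ : Measure Ω) [IsFiniteMeasure μ]
    (g : ℕ → Ω → ℝ) (hgint : ∀ n, Integrable (g n) μ)
    (hgbd : ∃ M : ℝ, ∀ n, ∫ ω, |g n ω| ∂μ ≤ M)
    (hgui : ∀ ε > (0 : ℝ), ∃ δ > (0 : ℝ), ∀ A : Set Ω, MeasurableSet A →
      μ A ≤ ENNReal.ofReal δ → ∀ n, ∫ ω in A, |g n ω| ∂μ ≤ ε) :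
    ∃ w : ℕ → (ℕ →₀ ℝ), (∀ j, w j ∈ TailW j) ∧ ∀ τ > (0 : ℝ), ∃ P : ℕ, ∀ i j, P ≤ i → P ≤ j →
      ∫ ω, |Finsupp.linearCombination ℝ g (w i) ω - Finsupp.linearCombination ℝ g (w j) ω| ∂μ
        ≤ τ := by
  obtain ⟨M, hM⟩ := hgbd
  have hM0 : 0 ≤ M := (integral_nonneg fun ω => abs_nonneg (g 0 ω)).trans (hM 0)
  let F : (ℕ →₀ ℝ) → Ω → ℝ := fun w => Finsupp.linearCombination ℝ g w
  let J : (ℕ →₀ ℝ) → ℝ := fun w => ∫ ω, √(1 + F w ω ^ 2) ∂μ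
  have hJ0 : ∀ w, 0 ≤ J w := fun w => integral_nonneg fun ω => Real.sqrt_nonneg _
  have hne : ∀ N, Finsupp.single N (1 : ℝ) ∈ TailW N := by
    intro N
    refine ⟨fun n => ?_, fun n hn => ?_, by simp⟩
    · rw [Finsupp.single_apply]; split_ifs <;> norm_num
    · rw [Finsupp.single_apply, if_neg (by omega)]
  have hbdd : ∀ N, BddBelow (J '' TailW N) := fun N => ⟨0, by rintro _ ⟨w, _, rfl⟩; exact hJ0 w⟩
  let s : ℕ → ℝ := fun N => sInf (J '' TailW N)
  have hsle : ∀ N, ∀ w ∈ TailW N, s N ≤ J w := fun N w hw => csInf_le (hbdd N) ⟨w, hw, rfl⟩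
  have hsb : BddAbove (range s) := by
    refine ⟨μ.real univ + M, ?_⟩
    rintro _ ⟨N, rfl⟩
    refine (hsle N _ (hne N)).trans ((phi_int_le μ _ (comb_int μ g hgint _)).trans ?_)
    have := comb_abs_le μ g hgint (hne N) M hM
    linarith
  set S := ⨆ N, s N with hS
  have ha : ∀ e > 0, ∃ N, ∀ w ∈ TailW N, S - e ≤ J w := by
    intro e he
    obtain ⟨N, hN⟩ := exists_lt_of_lt_ciSup (show S - e < ⨆ N, s N by rw [← hS]; linarith)
    exact ⟨N, fun w hw => hN.le.trans (hsle N w hw)⟩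
  have hb : ∀ j : ℕ, ∃ w ∈ TailW j, J w < S + 1 / ((j : ℝ) + 1) := by
    intro j
    have h1 : s j ≤ S := le_ciSup hsb j
    have h2 : (0 : ℝ) < 1 / ((j : ℝ) + 1) := by positivity
    obtain ⟨_, ⟨w, hw, rfl⟩, h⟩ := exists_lt_of_csInf_lt (⟨_, _, hne j, rfl⟩ : (J '' TailW j).Nonempty)
      (show s j < S + 1 / ((j : ℝ) + 1) by linarith)
    exact ⟨w, hw, h⟩
  choose w hw hwJ using hb
  refine ⟨w, hw, fun τ hτ => ?_⟩
  obtain ⟨δ, hδ, hU⟩ := hgui (τ / 4) (by positivity)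
  obtain ⟨e, he, hkey⟩ := key μ M τ δ hM0 hτ hδ
  obtain ⟨N, hN⟩ := ha e he
  obtain ⟨Q, hQ⟩ := exists_nat_one_div_lt he
  have hsmall : ∀ i, Q ≤ i → J (w i) ≤ S + e := by
    intro i hi
    have h1 := hwJ i
    have h2 : 1 / ((i : ℝ) + 1) ≤ 1 / ((Q : ℝ) + 1) := by gcongr
    linarith
  refine ⟨max N Q, fun i j hi hj => ?_⟩
  have hi1 : w i ∈ TailW N := TailW_mono ((le_max_left _ _).trans hi) (hw i)
  have hj1 : w j ∈ TailW N := TailW_mono ((le_max_left _ _).trans hj) (hw j)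
  have hmid := hN _ (TailW_mid hi1 hj1)
  have hmidF : J ((1 / 2 : ℝ) • (w i + w j)) = ∫ ω, √(1 + ((F (w i) ω + F (w j) ω) / 2) ^ 2) ∂μ := by
    simp only [J, F]
    congr 1
    ext ω
    rw [map_smul, map_add]
    simp only [Pi.smul_apply, Pi.add_apply, smul_eq_mul]
    congr 3
    ring
  have hi2 := hsmall i ((le_max_right _ _).trans hi)
  have hj2 := hsmall j ((le_max_right _ _).trans hj)
  refine hkey _ _ (comb_int μ g hgint _) (comb_int μ g hgint _)
    (comb_abs_le μ g hgint hi1 M hM) (comb_abs_le μ g hgint hj1 M hM)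
    (fun A hA hAδ => comb_abs_le _ g (fun n => (hgint n).integrableOn) hi1 _ (hU A hA hAδ))
    (fun A hA hAδ => comb_abs_le _ g (fun n => (hgint n).integrableOn) hj1 _ (hU A hA hAδ)) ?_
  rw [hmidF] at hmid
  simp only [J, F] at hmid hi2 hj2
  linarith

lemma final_step {Ω : Type*} [MeasurableSpace Ω] (μ : Measure Ω) [IsFiniteMeasure μ]
    (h : ℕ → Ω → ℝ) (hInt : ∀ n, Integrable (h n) μ)
    (ε : ℝ) (hε : 0 < ε) (B : Set Ω) (hB : MeasurableSet B)
    (hgB : ε ≤ ∫ ω in B, h 0 ω ∂μ)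
    (hc : ∀ k, ∫ ω, |h k ω - h (k + 1) ω| ∂μ ≤ ε / 4 * (1 / 2) ^ k) :
    ∃ η > (0 : ℝ), ∃ A : Set Ω, MeasurableSet A ∧ A ⊆ B ∧ 0 < μ A ∧
        ∀ k, ∀ᵐ ω ∂μ, ω ∈ A → η ≤ h k ω := by
  let G : Ω → ENNReal := fun ω => ∑' k, edist (h k ω) (h (k + 1) ω)
  have hmeas : ∀ k, AEMeasurable (fun ω => edist (h k ω) (h (k + 1) ω)) μ := fun k =>
    (hInt k).aemeasurable.edist (hInt (k + 1)).aemeasurable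
  have hGm : AEMeasurable G μ := AEMeasurable.tsum hmeas
  have hGI : ∫⁻ ω, G ω ∂μ ≤ ENNReal.ofReal (ε / 2) := by
    rw [lintegral_tsum hmeas]
    have hsum : HasSum (fun k : ℕ => ε / 4 * (1 / 2 : ℝ) ^ k) (ε / 2) := by
      have h2 := hasSum_geometric_two.mul_left (ε / 4)
      rwa [show ε / 4 * 2 = ε / 2 by ring] at h2
    rw [← hsum.tsum_eq, ENNReal.ofReal_tsum_of_nonneg (fun n => by positivity) hsum.summable]
    refine ENNReal.tsum_le_tsum fun k => ?_
    simp only [edist_eq_enorm_sub]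
    have hi : Integrable (fun ω => h k ω - h (k + 1) ω) μ := (hInt k).sub (hInt (k + 1))
    rw [← ofReal_integral_norm_eq_lintegral_enorm hi]
    exact ENNReal.ofReal_le_ofReal (hc k)
  have hGne : ∫⁻ ω, G ω ∂μ ≠ ⊤ := (hGI.trans_lt ENNReal.ofReal_lt_top).ne
  have hGfin : ∀ᵐ ω ∂μ, G ω < ⊤ := ae_lt_top' hGm hGne
  have hGint : Integrable (fun ω => (G ω).toReal) μ := integrable_toReal_of_lintegral_ne_top hGm hGne
  have hGr : ∫ ω, (G ω).toReal ∂μ ≤ ε / 2 := by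
    rw [integral_toReal hGm hGfin]
    exact ENNReal.toReal_le_of_le_ofReal (by positivity) hGI
  have hlow : ∀ k, ∀ᵐ ω ∂μ, h 0 ω - (G ω).toReal ≤ h k ω := by
    intro k
    filter_upwards [hGfin] with ω hω
    have h1 : edist (h 0 ω) (h k ω) ≤ G ω :=
      (edist_le_range_sum_edist (fun k => h k ω) k).trans (ENNReal.sum_le_tsum _)
    have h2 : dist (h 0 ω) (h k ω) ≤ (G ω).toReal := by
      rw [dist_edist]; exact ENNReal.toReal_mono hω.ne h1
    rw [Real.dist_eq] at h2
    linarith [le_abs_self (h 0 ω - h k ω)]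
  let P : Ω → ℝ := fun ω => h 0 ω - (G ω).toReal
  have hP : Integrable P μ := (hInt 0).sub hGint
  have hPB : ε / 2 ≤ ∫ ω in B, P ω ∂μ := by
    simp only [P]
    rw [integral_sub (hInt 0).integrableOn hGint.integrableOn]
    have := setIntegral_le_integral (s := B) hGint (Eventually.of_forall fun ω => ENNReal.toReal_nonneg)
    linarith
  let Pm := hP.1.mk P
  have hPm : Measurable Pm := hP.1.stronglyMeasurable_mk.measurable
  have hPPm : P =ᵐ[μ] Pm := hP.1.ae_eq_mk
  set η := ε / (4 * (μ.real univ + 1)) with hη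
  have hm0 : 0 ≤ μ.real univ := measureReal_nonneg
  have hη0 : 0 < η := by positivity
  refine ⟨η, hη0, B ∩ {ω | η ≤ Pm ω}, hB.inter (measurableSet_le measurable_const hPm),
    inter_subset_left, ?_, fun k => ?_⟩
  · rw [pos_iff_ne_zero]
    intro h0
    have hae : ∀ᵐ ω ∂μ, ω ∉ B ∩ {ω | η ≤ Pm ω} := measure_eq_zero_iff_ae_notMem.1 h0
    have : ∫ ω in B, P ω ∂μ ≤ ∫ ω in B, η ∂μ := by
      refine setIntegral_mono_on_ae hP.integrableOn (integrable_const η).integrableOn hB ?_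
      filter_upwards [hae, hPPm] with ω h1 h2 hωB
      rw [h2]
      by_contra hcon
      exact h1 ⟨hωB, (not_le.1 hcon).le⟩
    have h2 : ∫ ω in B, η ∂μ ≤ ε / 4 := by
      calc _ = μ.real B * η := by simp
        _ ≤ (μ.real univ + 1) * η := by
          gcongr
          have : μ.real B ≤ μ.real univ := measureReal_mono (subset_univ _)
          linarith
        _ = ε / 4 := by rw [hη]; field_simp
    linarith
  · filter_upwards [hlow k, hPPm] with ω h1 h2 hω
    have h3 : η ≤ Pm ω := hω.2
    rw [← h2] at h3
    exact h3.trans h1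

/-- If `(g_n)` is a uniformly integrable sequence in `L¹(μ)` with `∫_B g_n dμ ≥ ε` for all
`n` (for some `ε > 0` and `B ∈ Σ` of positive measure), then some convex block subsequence
`(h_k)` of `(g_n)` satisfies `h_k ≥ η > 0` on a set `A ⊆ B` of positive measure. -/
theorem exists_convexBlock_ge_of_unifIntegrable
    {Ω : Type*} [MeasurableSpace Ω] (μ : Measure Ω) [IsFiniteMeasure μ]
    (g : ℕ → Ω → ℝ) (hgint : ∀ n, Integrable (g n) μ)
    (hgbd : ∃ M : ℝ, ∀ n, ∫ ω, |g n ω| ∂μ ≤ M)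
    (hgui : ∀ ε > (0 : ℝ), ∃ δ > (0 : ℝ), ∀ A : Set Ω, MeasurableSet A →
      μ A ≤ ENNReal.ofReal δ → ∀ n, ∫ ω in A, |g n ω| ∂μ ≤ ε)
    (ε : ℝ) (hε : 0 < ε) (B : Set Ω) (hB : MeasurableSet B) (hBpos : 0 < μ B)
    (hgB : ∀ n, ε ≤ ∫ ω in B, g n ω ∂μ) :
    ∃ h : ℕ → Ω → ℝ, ConvexBlock g h ∧
      ∃ η > (0 : ℝ), ∃ A : Set Ω, MeasurableSet A ∧ A ⊆ B ∧ 0 < μ A ∧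
        ∀ k, ∀ᵐ ω ∂μ, ω ∈ A → η ≤ h k ω := by
  obtain ⟨w, hw, hcau⟩ := exists_cauchy μ g hgint hgbd hgui
  choose P hP using fun k : ℕ => hcau (ε / 4 * (1 / 2) ^ k) (by positivity)
  let L : ℕ → ℕ := fun j => (w j).support.sup id
  let ψ : ℕ → ℕ := fun k => Nat.rec (P 0) (fun k p => max (P (k + 1)) (L p + p + 1)) k
  have hψs : ∀ k, ψ (k + 1) = max (P (k + 1)) (L (ψ k) + ψ k + 1) := fun k => rfl
  have hψP : ∀ k, P k ≤ ψ k := by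
    intro k
    cases k with
    | zero => exact le_refl _
    | succ k => rw [hψs]; exact le_max_left _ _
  have hψL : ∀ k, L (ψ k) + ψ k + 1 ≤ ψ (k + 1) := fun k => by rw [hψs]; exact le_max_right _ _
  have hmono : StrictMono ψ := strictMono_nat_of_lt_succ fun k => by have := hψL k; omega
  have hsupL : ∀ j, ∀ n ∈ (w j).support, n ≤ L j := fun j n hn =>
    Finset.le_sup (f := id) hn
  have hsupG : ∀ j, ∀ n ∈ (w j).support, j ≤ n := by
    intro j n hn
    by_contra hlt
    exact (Finsupp.mem_support_iff.1 hn) ((hw j).2.1 n (not_le.1 hlt))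
  have hlt : ∀ k l, k < l → ∀ n ∈ (w (ψ k)).support, ∀ m ∈ (w (ψ l)).support, n < m := by
    intro k l hkl n hn m hm
    have h1 := hsupL _ n hn
    have h2 := hsupG _ m hm
    have h3 := hψL k
    have h4 : ψ (k + 1) ≤ ψ l := hmono.monotone hkl
    omega
  classical
  let a : ℕ → ℝ := fun n => if hn : ∃ k, n ∈ (w (ψ k)).support then w (ψ hn.choose) n else 0
  have haw : ∀ k, ∀ n ∈ (w (ψ k)).support, a n = w (ψ k) n := by
    intro k n hn
    have hex : ∃ k, n ∈ (w (ψ k)).support := ⟨k, hn⟩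
    have hk : hex.choose = k := by
      have hs := hex.choose_spec
      rcases lt_trichotomy hex.choose k with h | h | h
      · exact absurd (hlt _ _ h n hs n hn) (lt_irrefl _)
      · exact h
      · exact absurd (hlt _ _ h n hn n hs) (lt_irrefl _)
    simp only [a, dif_pos hex, hk]
  refine ⟨fun k => Finsupp.linearCombination ℝ g (w (ψ k)),
    ⟨fun k => (w (ψ k)).support, a, fun k => hlt k (k + 1) (Nat.lt_succ_self k), ?_, ?_, ?_⟩, ?_⟩
  · intro n
    simp only [a]
    split_ifs with hn
    · exact (hw _).1 n
    · exact le_rfl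
  · intro k
    rw [Finset.sum_congr rfl (haw k)]
    exact TailW_sum (hw _)
  · intro k
    simp only [Finsupp.linearCombination_apply, Finsupp.sum]
    exact Finset.sum_congr rfl fun n hn => by rw [haw k n hn]
  · refine final_step μ _ (fun k => comb_int μ g hgint _) ε hε B hB
      (comb_ge _ g (fun n => (hgint n).integrableOn) (hw _) ε hgB) fun k => ?_
    exact hP k _ _ (hψP k) ((hψP k).trans (hmono (Nat.lt_succ_self k)).le)
end
end
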